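/- arXiv:1707.03507 — 3 statements merged into one kernel-verified Lean document; each statement's English description precedes it below -/
import Mathlib

section
/- Let G be a finite simple graph with m edges that is a disjoint union of odd cycles. Then there exist an orientation D of G and a bijection c from the arc set of D to {1, 2, …, m} such that the vertex-sums of all vertices of D under c are pairwise distinct, every vertex-sum is nonzero, and every vertex-sum has absolute value at most 2m − 1. -/
open Finset

/-- `A` is an orientation of the simple graph `G`: every edge of `G` receives exactly one
direction, and every arc of `A` comes from an edge of `G`. -/
def IsOrientation {V : Type*} (G : SimpleGraph V) (A : Finset (V × V)) : Prop :=
  (∀ u v : V, G.Adj u v ↔ ((u, v) ∈ A ∨ (v, u) ∈ A)) ∧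
    ∀ u v : V, ¬((u, v) ∈ A ∧ (v, u) ∈ A)

/-- The vertex-sum of `u` for the arc-labeling `c`: the sum of labels of arcs entering `u`
minus the sum of labels of arcs leaving `u`. -/
def vertexSum {V : Type*} [DecidableEq V] (A : Finset (V × V)) (c : V × V → ℤ) (u : V) : ℤ :=
  (∑ a ∈ A.filter (fun a => a.2 = u), c a) - ∑ a ∈ A.filter (fun a => a.1 = u), c a

/-!
Follow each cycle from a starting vertex and orient its edges alternately forwards and backwards.
As the cycle is odd, every vertex except the starting one becomes a source or a sink, with sum plus
or minus the sum of its two labels, while the sum at the starting vertex is the difference of the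
labels of the last and the first edge. On the `j`-th of the `t` cycles (`0 ≤ j < t`) these two edges
get the labels `2 * t - 2 * j` and `2 * j + 1`, so the differences `2 * t - 4 * j - 1` are distinct
and at most `2 * t` in absolute value, whereas every other sum exceeds `2 * t` in absolute value.

The labels increase with the depth of the edge, its distance from the starting vertex. The two edges
at any other vertex have consecutive depths, so sums taken at different depths have different
absolute values. For a given depth and a given sign, each cycle contributes at most one vertex. With
the cycles sorted by length, the labels at a given depth, on a given side of the starting vertex,
grow with `j`, and so do the sums of consecutive labels. The exception is the last edge of a cycle,
whose labels drop by two from each cycle to the next; the labels of the penultimate edges are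
therefore made consecutive, so that the sums at these vertices decrease strictly.
-/

/-- `G` has an antimagic orientation with labels `1, …, m` whose vertex-sums are moreover nonzero
and at most `2 * m - 1` in absolute value. -/
def HasBoundedAntimagicOrientation {V : Type*} [DecidableEq V] (G : SimpleGraph V) (m : ℕ) : Prop :=
  ∃ (A : Finset (V × V)) (c : V × V → ℤ),
    IsOrientation G A ∧ Set.BijOn c ↑A (Set.Icc 1 (m : ℤ)) ∧
    (Pairwise fun u v : V => vertexSum A c u ≠ vertexSum A c v) ∧
    (∀ u : V, vertexSum A c u ≠ 0) ∧
    ∀ u : V, |vertexSum A c u| ≤ 2 * (m : ℤ) - 1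

/-! ### Orienting the cycles of a permutation -/

section PermOrientation

variable {V : Type*} (s : Equiv.Perm V) (ε : V → ℤˣ)

/-- The edge joining `x` to `s x`, directed from `x` to `s x` if `ε x = 1` and from `s x` to `x`
if `ε x = -1`. The edges of the graph of `s` are thus indexed by the vertices. -/
def signedArc (x : V) : V × V := if ε x = 1 then (x, s x) else (s x, x)

/-- The vertex-sum at `s x` when each arc `signedArc s ε y` carries the label `l y`. -/
def signedSum (l : V → ℤ) (x : V) : ℤ := ε x * l x - ε (s x) * l (s x)

variable {s ε}

lemma signedSum_permCongr {W : Type*} (f : W ≃ V) (s : Equiv.Perm W) (ε : W → ℤˣ) (l : W → ℤ) :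
    signedSum (f.permCongr s) (ε ∘ f.symm) (l ∘ f.symm) = signedSum s ε l ∘ f.symm := by
  ext v
  simp only [signedSum, Equiv.permCongr_apply, Function.comp_apply, Equiv.symm_apply_apply]

lemma signedArc_injective (hs : ∀ x, s (s x) ≠ x) : Function.Injective (signedArc s ε) := by
  intro x y h
  unfold signedArc at h
  split_ifs at h <;> obtain ⟨h₁, h₂⟩ := Prod.mk.inj h
  · exact h₁
  · exact absurd (by rw [← h₁, h₂]) (hs y)
  · exact absurd (by rw [h₁, ← h₂]) (hs x)
  · exact h₂

lemma signedSum_ne_zero_and_abs_le [Fintype V] {l : V → ℤ}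
    (hl : Set.BijOn l Set.univ (Set.Icc 1 (Fintype.card V))) {x : V} (hx : s x ≠ x) :
    signedSum s ε l x ≠ 0 ∧ |signedSum s ε l x| ≤ 2 * Fintype.card V - 1 := by
  have hne : l (s x) ≠ l x := fun h => hx (hl.injOn (Set.mem_univ _) (Set.mem_univ _) h)
  have hlx := hl.mapsTo (Set.mem_univ x)
  have hlsx := hl.mapsTo (Set.mem_univ (s x))
  rw [Set.mem_Icc] at hlx hlsx
  rw [signedSum, abs_le]
  rcases Int.units_eq_one_or (ε x) with h | h <;>
    rcases Int.units_eq_one_or (ε (s x)) with h' | h' <;>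
    simp only [h, h', Units.val_neg, Units.val_one] <;> omega

variable [Fintype V] [DecidableEq V]

lemma mem_image_signedArc {u v : V} :
    (u, v) ∈ univ.image (signedArc s ε) ↔ (ε u = 1 ∧ s u = v) ∨ (ε v ≠ 1 ∧ s v = u) := by
  simp only [mem_image, mem_univ, true_and, signedArc]
  constructor
  · rintro ⟨x, hx⟩
    split_ifs at hx with h <;> obtain ⟨rfl, rfl⟩ := Prod.mk.inj hx
    · exact Or.inl ⟨h, rfl⟩
    · exact Or.inr ⟨h, rfl⟩
  · rintro (⟨h, rfl⟩ | ⟨h, rfl⟩)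
    · exact ⟨u, if_pos h⟩
    · exact ⟨v, if_neg h⟩

lemma isOrientation_image_signedArc {G : SimpleGraph V}
    (hG : ∀ x y, G.Adj x y ↔ s x = y ∨ s y = x) (hs : ∀ x, s (s x) ≠ x) :
    IsOrientation G (univ.image (signedArc s ε)) := by
  refine ⟨fun u v => ?_, fun u v h => ?_⟩
  · rw [hG, mem_image_signedArc, mem_image_signedArc]
    tauto
  · rw [mem_image_signedArc, mem_image_signedArc] at h
    have huv : ¬ (s u = v ∧ s v = u) := fun ⟨hu, hv⟩ => hs u (by rw [hu, hv])
    tauto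

lemma vertexSum_image_signedArc (hs : ∀ x, s (s x) ≠ x) (c : V × V → ℤ) (x : V) :
    vertexSum (univ.image (signedArc s ε)) c (s x) =
      signedSum s ε (fun y => c (signedArc s ε y)) x := by
  have contribution (y v : V) :
      ((if (signedArc s ε y).2 = v then c (signedArc s ε y) else 0) -
          if (signedArc s ε y).1 = v then c (signedArc s ε y) else 0) =
        (if s y = v then ε y * c (signedArc s ε y) else 0) -
          if y = v then ε y * c (signedArc s ε y) else 0 := by
    rcases Int.units_eq_one_or (ε y) with h | h
    · simp [signedArc, h]
    · have h' : (-1 : ℤˣ) ≠ 1 := by decide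
      simp only [signedArc, h, h', if_false, Units.val_neg, Units.val_one]
      split_ifs <;> ring
  have arc_inj := (signedArc_injective (ε := ε) hs).injOn (s := ((univ : Finset V) : Set V))
  rw [vertexSum, sum_filter, sum_filter, sum_image arc_inj, sum_image arc_inj,
    ← sum_sub_distrib, sum_congr rfl fun y _ => contribution y (s x), sum_sub_distrib]
  simp [signedSum]

lemma bijOn_extend_signedArc (hs : ∀ x, s (s x) ≠ x) {l : V → ℤ} {S : Set ℤ}
    (hl : Set.BijOn l Set.univ S) :
    Set.BijOn (Function.extend (signedArc s ε) l 0) ↑(univ.image (signedArc s ε)) S := by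
  have arc_inj := signedArc_injective (ε := ε) hs
  rw [coe_image, coe_univ, ← Set.bijOn_comp_iff arc_inj.injOn, Function.extend_comp arc_inj]
  exact hl

theorem hasBoundedAntimagicOrientation_of_perm {G : SimpleGraph V}
    (hG : ∀ x y, G.Adj x y ↔ s x = y ∨ s y = x) (hs : ∀ x, s (s x) ≠ x)
    {l : V → ℤ} (hl : Set.BijOn l Set.univ (Set.Icc 1 (Fintype.card V)))
    (hsum : Function.Injective (signedSum s ε l)) :
    HasBoundedAntimagicOrientation G (Fintype.card V) := by
  set c := Function.extend (signedArc s ε) l 0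
  have vertexSum_eq (x : V) :
      vertexSum (univ.image (signedArc s ε)) c (s x) = signedSum s ε l x := by
    simp only [vertexSum_image_signedArc hs, c, (signedArc_injective hs).extend_apply]
  have hfix (x : V) : s x ≠ x := fun h => hs x (by rw [h, h])
  refine ⟨univ.image (signedArc s ε), c, isOrientation_image_signedArc hG hs,
    bijOn_extend_signedArc hs hl, fun u v huv => ?_, s.surjective.forall.2 fun x => ?_,
    s.surjective.forall.2 fun x => ?_⟩
  · obtain ⟨x, rfl⟩ := s.surjective u
    obtain ⟨y, rfl⟩ := s.surjective v
    rw [vertexSum_eq, vertexSum_eq]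
    exact hsum.ne fun h => huv (congrArg s h)
  · exact vertexSum_eq x ▸ (signedSum_ne_zero_and_abs_le hl (hfix x)).1
  · exact vertexSum_eq x ▸ (signedSum_ne_zero_and_abs_le hl (hfix x)).2

theorem hasBoundedAntimagicOrientation_of_equiv {W : Type*} [Fintype W] {G : SimpleGraph V}
    (f : W ≃ V) {s : Equiv.Perm W} {ε : W → ℤˣ} {l : W → ℤ}
    (hG : ∀ x y, G.Adj (f x) (f y) ↔ s x = y ∨ s y = x) (hs : ∀ x, s (s x) ≠ x)
    (hl : Set.BijOn l Set.univ (Set.Icc 1 (Fintype.card W)))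
    (hsum : Function.Injective (signedSum s ε l)) :
    HasBoundedAntimagicOrientation G (Fintype.card V) := by
  have hl' : Set.BijOn (l ∘ f.symm) Set.univ (Set.Icc 1 (Fintype.card V)) := by
    rw [← Fintype.card_congr f]
    exact hl.comp (Set.bijOn_univ.2 f.symm.bijective)
  have hsum' : Function.Injective (signedSum (f.permCongr s) (ε ∘ f.symm) (l ∘ f.symm)) := by
    rw [signedSum_permCongr]
    exact hsum.comp f.symm.injective
  refine hasBoundedAntimagicOrientation_of_perm ?_ ?_ hl' hsum'
  · refine f.surjective.forall₂.2 fun x y => ?_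
    simp only [hG, Equiv.permCongr_apply, Equiv.symm_apply_apply, f.apply_eq_iff_eq]
  · refine f.surjective.forall.2 fun x => ?_
    simpa only [Equiv.permCongr_apply, Equiv.symm_apply_apply, ne_eq, f.apply_eq_iff_eq] using hs x

end PermOrientation

lemma val_finRotate {m : ℕ} (k : Fin m) :
    (finRotate m k : ℕ) = if (k : ℕ) + 1 = m then 0 else (k : ℕ) + 1 := by
  cases m with
  | zero => exact k.elim0
  | succ m => simp only [coe_finRotate, Fin.ext_iff, Fin.val_last, Nat.add_right_cancel_iff]

/-! ### Disjoint unions of cycles with numbered vertices -/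

/-- The vertices of the disjoint union of `t` directed cycles of lengths `n 0, …, n (t - 1)`: the
pair `⟨j, i⟩` is the `i`-th vertex of the `j`-th cycle, counted from zero. A vertex `x` also names
the edge that joins it to its successor. -/
abbrev CycleVertex {t : ℕ} (n : Fin t → ℕ) : Type := Σ j, Fin (n j)

namespace CycleVertex

variable {t : ℕ} {n : Fin t → ℕ} {x y : CycleVertex n}

/-- The number of the cycle containing `x`, as a natural number. -/
def idx (x : CycleVertex n) : ℕ := x.1

/-- The position of `x` on its cycle, as a natural number. -/
def pos (x : CycleVertex n) : ℕ := x.2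

/-- The length of the cycle containing `x`. -/
def len (x : CycleVertex n) : ℕ := n x.1

/-- The permutation moving each vertex to its successor on its cycle. -/
def next : Equiv.Perm (CycleVertex n) := Equiv.sigmaCongrRight fun j => finRotate (n j)

lemma idx_lt (x : CycleVertex n) : x.idx < t := x.1.isLt

lemma pos_lt (x : CycleVertex n) : x.pos < x.len := x.2.isLt

lemma len_eq_of_idx_eq (h : x.idx = y.idx) : x.len = y.len := congrArg n (Fin.ext h)

lemma len_le_of_idx_le (hmono : Monotone n) (h : x.idx ≤ y.idx) : x.len ≤ y.len := hmono h

lemma ext_idx_pos (hidx : x.idx = y.idx) (hpos : x.pos = y.pos) : x = y := by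
  obtain ⟨j, i⟩ := x
  obtain ⟨k, i'⟩ := y
  obtain rfl : j = k := Fin.ext hidx
  exact congrArg (Sigma.mk j) (Fin.ext hpos)

lemma idx_next (x : CycleVertex n) : (next x).idx = x.idx := rfl

lemma len_next (x : CycleVertex n) : (next x).len = x.len := rfl

lemma pos_next (x : CycleVertex n) :
    (next x).pos = if x.pos + 1 = x.len then 0 else x.pos + 1 :=
  val_finRotate x.2

lemma pos_next_of_lt (h : x.pos + 1 < x.len) : (next x).pos = x.pos + 1 := by
  rw [pos_next, if_neg h.ne]

lemma pos_next_of_eq (h : x.pos + 1 = x.len) : (next x).pos = 0 := by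
  rw [pos_next, if_pos h]

lemma next_next_ne (hn : ∀ j, 3 ≤ n j) (x : CycleVertex n) : next (next x) ≠ x := by
  intro h
  have hpos := congrArg pos h
  have hlen : 3 ≤ x.len := hn x.1
  rw [pos_next, pos_next, len_next] at hpos
  have := x.pos_lt
  split_ifs at hpos <;> omega

/-! ### The labeling -/

/-- The distance of the edge `x` from the starting vertex of its cycle. -/
def depth (x : CycleVertex n) : ℕ := min x.pos (x.len - 1 - x.pos)

/-- The edges other than the first and the last two edges of their cycles. They get the largest
labels, in the order of their keys. -/
def inner : Finset (CycleVertex n) := {x | 1 ≤ x.pos ∧ x.pos + 3 ≤ x.len}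

/-- The key whose lexicographic order is the order of the labels on the inner edges. -/
def key (x : CycleVertex n) : ℕ ×ₗ ℕ ×ₗ ℕ := toLex (x.depth, toLex (x.idx, x.pos))

/-- The place of an inner edge in the order of the keys, counted from one. -/
def rank (x : CycleVertex n) : ℕ := #{y ∈ (inner : Finset (CycleVertex n)) | y.key ≤ x.key}

/-- The label of the edge joining `x` to `next x`. -/
def label (x : CycleVertex n) : ℕ :=
  if x.pos = 0 then 2 * x.idx + 1
  else if x.pos + 1 = x.len then 2 * t - 2 * x.idx
  else if x.pos + 2 = x.len then 2 * t + 1 + x.idx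
  else 3 * t + x.rank

lemma mem_inner : x ∈ inner ↔ 1 ≤ x.pos ∧ x.pos + 3 ≤ x.len := by
  simp only [inner, mem_filter, mem_univ, true_and]

lemma rank_le_card_inner (x : CycleVertex n) : x.rank ≤ #(inner (n := n)) :=
  card_le_card (filter_subset _ _)

lemma rank_pos (hx : x ∈ inner) : 0 < x.rank :=
  card_pos.2 ⟨x, mem_filter.2 ⟨hx, le_rfl⟩⟩

lemma rank_lt_rank (hy : y ∈ inner) (h : x.key < y.key) : x.rank < y.rank := by
  refine card_lt_card (ssubset_iff_of_subset ?_ |>.2 ⟨y, ?_, ?_⟩)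
  · exact monotone_filter_right _ fun _ _ hz => hz.trans h.le
  · exact mem_filter.2 ⟨hy, le_rfl⟩
  · exact fun hyx => h.not_ge (mem_filter.1 hyx).2

lemma key_injective : Function.Injective (key (n := n)) := fun _ _ h =>
  have h' := (Prod.mk.inj (toLex.injective h)).2
  ext_idx_pos (Prod.mk.inj (toLex.injective h')).1 (Prod.mk.inj (toLex.injective h')).2

lemma rank_injOn : Set.InjOn rank (inner (n := n) : Set (CycleVertex n)) := by
  intro x hx y hy h
  by_contra hne
  rcases lt_or_gt_of_ne (key_injective.ne hne) with hlt | hlt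
  · exact (rank_lt_rank hy hlt).ne h
  · exact (rank_lt_rank hx hlt).ne' h

lemma three_mul_add_card_inner_le (hn : ∀ j, 3 ≤ n j) :
    3 * t + #(inner (n := n)) ≤ Fintype.card (CycleVertex n) := by
  have inner_eq : inner (n := n) =
      univ.sigma fun j => ({i | 1 ≤ (i : ℕ) ∧ (i : ℕ) + 3 ≤ n j} : Finset (Fin (n j))) := by
    ext x
    simp only [mem_inner, mem_sigma, mem_filter, mem_univ, true_and, pos, len]
  have card_fiber_le (j : Fin t) :
      #({i | 1 ≤ (i : ℕ) ∧ (i : ℕ) + 3 ≤ n j} : Finset (Fin (n j))) ≤ n j - 3 := by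
    refine (card_le_card_of_injOn (t := Icc 1 (n j - 3)) Fin.val ?_
      Fin.val_injective.injOn).trans_eq (by simp)
    intro i hi
    rw [coe_filter, Set.mem_ofPred_eq] at hi
    rw [coe_Icc, Set.mem_Icc]
    omega
  calc 3 * t + #(inner (n := n))
      = ∑ j, (3 + #({i | 1 ≤ (i : ℕ) ∧ (i : ℕ) + 3 ≤ n j} : Finset (Fin (n j)))) := by
        rw [inner_eq, card_sigma, sum_add_distrib, sum_const, card_univ, Fintype.card_fin,
          smul_eq_mul, mul_comm]
    _ ≤ ∑ j, n j := sum_le_sum fun j _ => by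
        have := card_fiber_le j
        have := hn j
        omega
    _ = Fintype.card (CycleVertex n) := by simp only [Fintype.card_sigma, Fintype.card_fin]

lemma label_of_pos_eq_zero (h : x.pos = 0) : x.label = 2 * x.idx + 1 := if_pos h

lemma label_of_pos_add_one (hlen : 3 ≤ x.len) (h : x.pos + 1 = x.len) :
    x.label = 2 * t - 2 * x.idx := by
  rw [label, if_neg (by omega), if_pos h]

lemma label_of_pos_add_two (hlen : 3 ≤ x.len) (h : x.pos + 2 = x.len) :
    x.label = 2 * t + 1 + x.idx := by
  rw [label, if_neg (by omega), if_neg (by omega), if_pos h]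

lemma label_of_mem_inner (h : x ∈ inner) : x.label = 3 * t + x.rank := by
  rw [mem_inner] at h
  rw [label, if_neg (by omega), if_neg (by omega), if_neg (by omega)]

lemma label_cases (hn : ∀ j, 3 ≤ n j) (x : CycleVertex n) :
    (x.pos = 0 ∧ x.label = 2 * x.idx + 1) ∨
    (x.pos + 1 = x.len ∧ x.label = 2 * t - 2 * x.idx) ∨
    (x.pos + 2 = x.len ∧ x.label = 2 * t + 1 + x.idx) ∨
    (x ∈ inner ∧ 0 < x.rank ∧ x.label = 3 * t + x.rank) := by
  have hlen : 3 ≤ x.len := hn x.1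
  have hpos := x.pos_lt
  by_cases h₀ : x.pos = 0
  · exact .inl ⟨h₀, label_of_pos_eq_zero h₀⟩
  by_cases h₁ : x.pos + 1 = x.len
  · exact .inr (.inl ⟨h₁, label_of_pos_add_one hlen h₁⟩)
  by_cases h₂ : x.pos + 2 = x.len
  · exact .inr (.inr (.inl ⟨h₂, label_of_pos_add_two hlen h₂⟩))
  have hx : x ∈ inner := mem_inner.2 (by omega)
  exact .inr (.inr (.inr ⟨hx, rank_pos hx, label_of_mem_inner hx⟩))

lemma label_mem_Icc (hn : ∀ j, 3 ≤ n j) (x : CycleVertex n) :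
    x.label ∈ Set.Icc 1 (Fintype.card (CycleVertex n)) := by
  have hcard := three_mul_add_card_inner_le hn
  have hidx := x.idx_lt
  have hrank := x.rank_le_card_inner
  rw [Set.mem_Icc]
  rcases label_cases hn x with ⟨-, h⟩ | ⟨-, h⟩ | ⟨-, h⟩ | ⟨-, -, h⟩ <;> omega

lemma label_injective (hn : ∀ j, 3 ≤ n j) : Function.Injective (label (n := n)) := by
  intro x y h
  have hx := x.idx_lt
  have hy := y.idx_lt
  have hlen : x.idx = y.idx → x.len = y.len := len_eq_of_idx_eq
  rcases label_cases hn x with ⟨px, lx⟩ | ⟨px, lx⟩ | ⟨px, lx⟩ | ⟨mx, rx, lx⟩ <;>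
    rcases label_cases hn y with ⟨py, ly⟩ | ⟨py, ly⟩ | ⟨py, ly⟩ | ⟨my, ry, ly⟩
  case inr.inr.inr.inr.inr.inr => exact rank_injOn mx my (by omega)
  all_goals exact ext_idx_pos (by omega) (by omega)

lemma bijOn_label (hn : ∀ j, 3 ≤ n j) :
    Set.BijOn (fun x : CycleVertex n => (x.label : ℤ)) Set.univ
      (Set.Icc 1 (Fintype.card (CycleVertex n))) := by
  have himage : univ.image (label (n := n)) = Icc 1 (Fintype.card (CycleVertex n)) := by
    refine eq_of_subset_of_card_le (image_subset_iff.2 fun x _ => mem_Icc.2 (label_mem_Icc hn x)) ?_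
    rw [card_image_of_injective _ (label_injective hn), Nat.card_Icc, card_univ,
      Nat.add_sub_cancel]
  refine ⟨fun x _ => ?_, fun x _ y _ h => label_injective hn (Int.ofNat.inj h), fun k hk => ?_⟩
  · obtain ⟨h₁, h₂⟩ := label_mem_Icc hn x
    exact ⟨Nat.one_le_cast.2 h₁, Nat.cast_le.2 h₂⟩
  · lift k to ℕ using zero_le_one.trans hk.1
    have hk' : k ∈ univ.image (label (n := n)) := by
      rw [himage, mem_Icc]
      exact ⟨Nat.one_le_cast.1 hk.1, Nat.cast_le.1 hk.2⟩
    obtain ⟨x, -, rfl⟩ := mem_image.1 hk'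
    exact ⟨x, Set.mem_univ x, rfl⟩

lemma label_lt_of_depth_lt (hn : ∀ j, 3 ≤ n j) (h : x.depth < y.depth) : x.label < y.label := by
  have hx := x.idx_lt
  have hlx : 3 ≤ x.len := hn x.1
  have hly : 3 ≤ y.len := hn y.1
  have hkey : x.key < y.key := Prod.Lex.toLex_lt_toLex.2 (.inl h)
  unfold depth at h
  rcases label_cases hn x with ⟨px, lx⟩ | ⟨px, lx⟩ | ⟨px, lx⟩ | ⟨mx, rx, lx⟩ <;>
    rcases label_cases hn y with ⟨py, ly⟩ | ⟨py, ly⟩ | ⟨py, ly⟩ | ⟨my, ry, ly⟩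
  case inr.inr.inr.inr.inr.inr =>
    have := rank_lt_rank my hkey
    omega
  all_goals try rw [mem_inner] at mx
  all_goals omega

lemma label_lt_of_depth_eq (hn : ∀ j, 3 ≤ n j) (h₀ : 0 < x.depth) (h : x.depth = y.depth)
    (hidx : x.idx < y.idx) (hpen : y.pos + 2 = y.len → x.pos + 2 = x.len) :
    x.label < y.label := by
  have hx := x.idx_lt
  have hkey : x.key < y.key :=
    Prod.Lex.toLex_lt_toLex.2 (.inr ⟨h, Prod.Lex.toLex_lt_toLex.2 (.inl hidx)⟩)
  unfold depth at h h₀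
  rcases label_cases hn x with ⟨-, lx⟩ | ⟨px, lx⟩ | ⟨-, lx⟩ | ⟨mx, rx, lx⟩ <;>
    rcases label_cases hn y with ⟨py, ly⟩ | ⟨py, ly⟩ | ⟨py, ly⟩ | ⟨my, ry, ly⟩
  case inr.inr.inr.inr.inr.inr =>
    have := rank_lt_rank my hkey
    omega
  all_goals try rw [mem_inner] at mx
  all_goals omega

/-! ### Sums of consecutive labels -/

/-- The sum of the labels of the two edges that meet at `next x`. -/
def pairSum (x : CycleVertex n) : ℕ := x.label + (next x).label

/-- The smaller of the depths of the two edges that meet at `next x`, if `x` is not the last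
edge of its cycle. -/
def pairDepth (x : CycleVertex n) : ℕ := min x.pos (x.len - 2 - x.pos)

lemma depth_of_two_mul_lt (h : 2 * (x.pos + 1) < x.len) :
    x.depth = x.pos ∧ (next x).depth = x.pos + 1 ∧ x.pairDepth = x.pos := by
  have hnext := pos_next_of_lt (x := x) (by omega)
  have hlen := x.len_next
  unfold pairDepth depth
  omega

lemma depth_of_le_two_mul (hodd : Odd x.len) (hx : x.pos + 1 < x.len)
    (h : x.len ≤ 2 * (x.pos + 1)) :
    x.depth = x.len - 1 - x.pos ∧ (next x).depth = x.len - 2 - x.pos ∧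
      x.pairDepth = x.len - 2 - x.pos := by
  have hnext := pos_next_of_lt hx
  have hlen := x.len_next
  obtain ⟨k, hk⟩ := hodd
  unfold pairDepth depth
  omega

lemma depth_eq_or_depth_next_eq (hodd : Odd x.len) (hx : x.pos + 1 < x.len) :
    (x.depth = x.pairDepth ∧ (next x).depth = x.pairDepth + 1) ∨
      ((next x).depth = x.pairDepth ∧ x.depth = x.pairDepth + 1) := by
  rcases lt_or_ge (2 * (x.pos + 1)) x.len with h | h
  · have := depth_of_two_mul_lt h
    omega
  · have := depth_of_le_two_mul hodd hx h
    omega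

lemma pairSum_lt_of_pairDepth_lt (hn : ∀ j, 3 ≤ n j) (hodd : ∀ j, Odd (n j))
    (hx : x.pos + 1 < x.len) (hy : y.pos + 1 < y.len) (h : x.pairDepth < y.pairDepth) :
    x.pairSum < y.pairSum := by
  have pairSum_lt {a b c d : CycleVertex n} (hac : a.depth < c.depth) (hbd : b.depth < d.depth) :
      a.label + b.label < c.label + d.label :=
    add_lt_add (label_lt_of_depth_lt hn hac) (label_lt_of_depth_lt hn hbd)
  unfold pairSum
  rcases depth_eq_or_depth_next_eq (hodd x.1) hx with hx' | hx' <;>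
    rcases depth_eq_or_depth_next_eq (hodd y.1) hy with hy' | hy'
  · exact pairSum_lt (by omega) (by omega)
  · rw [add_comm y.label]
    exact pairSum_lt (by omega) (by omega)
  · rw [add_comm x.label]
    exact pairSum_lt (by omega) (by omega)
  · exact pairSum_lt (by omega) (by omega)

lemma two_mul_lt_pairSum (hn : ∀ j, 3 ≤ n j) (hodd : ∀ j, Odd (n j)) (hx : x.pos + 1 < x.len) :
    2 * t < x.pairSum := by
  have two_mul_lt_label (y : CycleVertex n) (hy : 0 < y.depth) : 2 * t < y.label := by
    unfold depth at hy
    rcases label_cases hn y with h | h | h | h <;> omega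
  unfold pairSum
  rcases depth_eq_or_depth_next_eq (hodd x.1) hx with ⟨-, h⟩ | ⟨-, h⟩
  · have := two_mul_lt_label (next x) (by omega)
    omega
  · have := two_mul_lt_label x (by omega)
    omega

lemma pairSum_lt_of_pos_eq (hn : ∀ j, 3 ≤ n j) (hmono : Monotone n)
    (hx : 2 * (x.pos + 1) < x.len) (hpos : x.pos = y.pos) (hidx : x.idx < y.idx) :
    x.pairSum < y.pairSum := by
  have hlen : x.len ≤ y.len := len_le_of_idx_le hmono hidx.le
  have hlenx := x.len_next
  have hleny := y.len_next
  have hx' := depth_of_two_mul_lt hx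
  have hy' := depth_of_two_mul_lt (x := y) (by omega)
  have hposx := pos_next_of_lt (x := x) (by omega)
  have hposy := pos_next_of_lt (x := y) (by omega)
  have hlabel_next : (next x).label < (next y).label :=
    label_lt_of_depth_eq hn (by omega) (by omega) hidx (by omega)
  have hlabel : x.label < y.label := by
    rcases Nat.eq_zero_or_pos x.pos with h₀ | h₀
    · rw [label_of_pos_eq_zero h₀, label_of_pos_eq_zero (hpos ▸ h₀)]
      omega
    · exact label_lt_of_depth_eq hn (by omega) (by omega) hidx (by omega)
  exact add_lt_add hlabel hlabel_next

lemma pairSum_ne_of_len_sub_pos_eq (hn : ∀ j, 3 ≤ n j) (hodd : ∀ j, Odd (n j))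
    (hx : x.pos + 1 < x.len) (hx' : x.len ≤ 2 * (x.pos + 1)) (hy' : y.len ≤ 2 * (y.pos + 1))
    (hpos : x.len - x.pos = y.len - y.pos) (hidx : x.idx < y.idx) :
    x.pairSum ≠ y.pairSum := by
  have hlenx := x.len_next
  have hleny := y.len_next
  have dx := depth_of_le_two_mul (hodd x.1) hx hx'
  have dy := depth_of_le_two_mul (hodd y.1) (by omega) hy'
  have hposx := pos_next_of_lt hx
  have hposy := pos_next_of_lt (x := y) (by omega)
  unfold pairSum
  by_cases hpen : x.pos + 2 = x.len
  · -- the labels at depth zero drop by two from cycle to cycle, those at depth one grow by one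
    have hlt := y.idx_lt
    rw [label_of_pos_add_two (hn x.1) hpen, label_of_pos_add_two (hn y.1) (by omega),
      label_of_pos_add_one (x := next x) (hn x.1) (by omega),
      label_of_pos_add_one (x := next y) (hn y.1) (by omega), idx_next, idx_next]
    omega
  · have hlabel : x.label < y.label :=
      label_lt_of_depth_eq hn (by omega) (by omega) hidx (by omega)
    have hlabel_next : (next x).label < (next y).label :=
      label_lt_of_depth_eq hn (by omega) (by omega) hidx (by omega)
    exact (add_lt_add hlabel hlabel_next).ne

lemma eq_of_pairSum_eq (hn : ∀ j, 3 ≤ n j) (hodd : ∀ j, Odd (n j)) (hmono : Monotone n)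
    (hx : x.pos + 1 < x.len) (hy : y.pos + 1 < y.len) (hparity : Even x.pos ↔ Even y.pos)
    (h : x.pairSum = y.pairSum) : x = y := by
  have hdepth : x.pairDepth = y.pairDepth := by
    rcases lt_trichotomy x.pairDepth y.pairDepth with hlt | heq | hlt
    · exact absurd h (pairSum_lt_of_pairDepth_lt hn hodd hx hy hlt).ne
    · exact heq
    · exact absurd h (pairSum_lt_of_pairDepth_lt hn hodd hy hx hlt).ne'
  have hlen : x.idx = y.idx → x.len = y.len := len_eq_of_idx_eq
  obtain ⟨k, hk⟩ : Odd x.len := hodd x.1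
  obtain ⟨l, hl⟩ : Odd y.len := hodd y.1
  rw [Nat.even_iff, Nat.even_iff] at hparity
  unfold pairDepth at hdepth
  rcases lt_or_ge (2 * (x.pos + 1)) x.len with hx' | hx'
  · have hy' : 2 * (y.pos + 1) < y.len := by omega
    have hpos : x.pos = y.pos := by omega
    refine ext_idx_pos ?_ hpos
    rcases lt_trichotomy x.idx y.idx with hlt | heq | hlt
    · exact absurd h (pairSum_lt_of_pos_eq hn hmono hx' hpos hlt).ne
    · exact heq
    · exact absurd h (pairSum_lt_of_pos_eq hn hmono hy' hpos.symm hlt).ne'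
  · have hy' : y.len ≤ 2 * (y.pos + 1) := by omega
    have hpos : x.len - x.pos = y.len - y.pos := by omega
    have hidx : x.idx = y.idx := by
      rcases lt_trichotomy x.idx y.idx with hlt | heq | hlt
      · exact absurd h (pairSum_ne_of_len_sub_pos_eq hn hodd hx hx' hy' hpos hlt)
      · exact heq
      · exact absurd h.symm (pairSum_ne_of_len_sub_pos_eq hn hodd hy hy' hx' hpos.symm hlt)
    exact ext_idx_pos hidx (by omega)

/-- The signs that alternate along each cycle, starting with `1`. On an odd cycle only the first
and the last edge have the same sign at their common vertex. -/
def sign (x : CycleVertex n) : ℤˣ := (-1) ^ x.pos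

lemma signedSum_label_of_eq (hn : ∀ j, 3 ≤ n j) (hodd : Odd x.len) (hx : x.pos + 1 = x.len) :
    signedSum next sign (fun y => (y.label : ℤ)) x = 2 * t - 4 * x.idx - 1 := by
  have hidx := x.idx_lt
  have heven : Even x.pos := by
    obtain ⟨k, hk⟩ := hodd
    exact ⟨k, by omega⟩
  rw [signedSum, sign, sign, heven.neg_one_pow, pos_next_of_eq hx, pow_zero, Units.val_one,
    label_of_pos_add_one (hn x.1) hx, label_of_pos_eq_zero (pos_next_of_eq hx), idx_next]
  omega

lemma signedSum_label_of_lt (hx : x.pos + 1 < x.len) :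
    signedSum next sign (fun y => (y.label : ℤ)) x = x.sign * x.pairSum := by
  rw [signedSum, sign, sign, pos_next_of_lt hx, pow_succ, pairSum]
  push_cast
  ring

theorem signedSum_label_injective (hn : ∀ j, 3 ≤ n j) (hodd : ∀ j, Odd (n j))
    (hmono : Monotone n) :
    Function.Injective (signedSum (next (n := n)) sign fun x => (x.label : ℤ)) := by
  have abs_signedSum_le (z : CycleVertex n) (hz : z.pos + 1 = z.len) :
      |signedSum next sign (fun w => (w.label : ℤ)) z| ≤ 2 * t := by
    have := z.idx_lt
    rw [signedSum_label_of_eq hn (hodd z.1) hz, abs_le]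
    omega
  have lt_abs_signedSum (z : CycleVertex n) (hz : z.pos + 1 < z.len) :
      2 * t < |signedSum next sign (fun w => (w.label : ℤ)) z| := by
    rw [signedSum_label_of_lt hz, abs_mul, Int.abs_eq_natAbs, Int.units_natAbs, Nat.cast_one,
      one_mul, Nat.abs_cast]
    exact_mod_cast two_mul_lt_pairSum hn hodd hz
  intro x y h
  rcases (Nat.succ_le_of_lt x.pos_lt).eq_or_lt with hx | hx <;>
    rcases (Nat.succ_le_of_lt y.pos_lt).eq_or_lt with hy | hy
  · rw [signedSum_label_of_eq hn (hodd x.1) hx, signedSum_label_of_eq hn (hodd y.1) hy] at h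
    have hidx : x.idx = y.idx := by omega
    have hlen := len_eq_of_idx_eq hidx
    exact ext_idx_pos hidx (by omega)
  · exact absurd (h ▸ abs_signedSum_le x hx) (lt_abs_signedSum y hy).not_ge
  · exact absurd (h ▸ abs_signedSum_le y hy) (lt_abs_signedSum x hx).not_ge
  · rw [signedSum_label_of_lt hx, signedSum_label_of_lt hy] at h
    have hpx := two_mul_lt_pairSum hn hodd hx
    rcases Nat.even_or_odd x.pos with ex | ox <;> rcases Nat.even_or_odd y.pos with ey | oy
    · simp only [sign, ex.neg_one_pow, ey.neg_one_pow, Units.val_one] at h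
      exact eq_of_pairSum_eq hn hodd hmono hx hy (iff_of_true ex ey) (by omega)
    · simp only [sign, ex.neg_one_pow, oy.neg_one_pow, Units.val_neg, Units.val_one] at h
      omega
    · simp only [sign, ox.neg_one_pow, ey.neg_one_pow, Units.val_neg, Units.val_one] at h
      omega
    · simp only [sign, ox.neg_one_pow, oy.neg_one_pow, Units.val_neg, Units.val_one] at h
      exact eq_of_pairSum_eq hn hodd hmono hx hy
        (iff_of_false (Nat.not_even_iff_odd.2 ox) (Nat.not_even_iff_odd.2 oy)) (by omega)

end CycleVertex

/-! ### Two-regular graphs -/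

section TwoRegular

variable {V : Type*} {G : SimpleGraph V}

lemma exists_fin_of_isCycle {v : V} {p : G.Walk v v} (hp : p.IsCycle) :
    ∃ f : Fin p.length → V, Function.Injective f ∧ Set.range f = p.toSubgraph.verts ∧
      ∀ i, G.Adj (f i) (f (finRotate _ i)) := by
  have hlen := hp.three_le_length
  refine ⟨fun i => p.getVert i, fun i j h => Fin.ext (hp.getVert_injOn' ?_ ?_ h), ?_, fun i => ?_⟩
  · rw [Set.mem_ofPred_eq]
    omega
  · rw [Set.mem_ofPred_eq]
    omega
  · ext w
    rw [SimpleGraph.Walk.mem_verts_toSubgraph, SimpleGraph.Walk.mem_support_iff_exists_getVert]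
    constructor
    · rintro ⟨i, rfl⟩
      exact ⟨i, rfl, i.isLt.le⟩
    · rintro ⟨i, rfl, hi⟩
      rcases hi.eq_or_lt with rfl | hi
      · exact ⟨⟨0, by omega⟩, by simp⟩
      · exact ⟨⟨i, hi⟩, rfl⟩
  · have hadj := p.adj_getVert_succ i.isLt
    simp only [val_finRotate]
    split_ifs with h
    · rwa [h, p.getVert_length.trans p.getVert_zero.symm] at hadj
    · exact hadj

lemma exists_fin_supp_of_isCycles [Finite V] (hG : G.IsCycles)
    {C : G.ConnectedComponent} {v : V} (hv : v ∈ C.supp) (hne : (G.neighborSet v).Nonempty) :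
    ∃ (k : ℕ) (f : Fin k → V), 3 ≤ k ∧ Function.Injective f ∧ Set.range f = C.supp ∧
      ∀ i, G.Adj (f i) (f (finRotate k i)) := by
  obtain ⟨p, hp, hverts⟩ := hG.exists_cycle_toSubgraph_verts_eq_connectedComponentSupp hv hne
  obtain ⟨f, hinj, hrange, hadj⟩ := exists_fin_of_isCycle hp
  exact ⟨p.length, f, hp.three_le_length, hinj, hrange.trans hverts, hadj⟩

variable [Fintype V] [DecidableRel G.Adj]

lemma isCycles_of_isRegularOfDegree_two (hG : G.IsRegularOfDegree 2) : G.IsCycles := by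
  intro v _
  rw [Set.ncard_eq_toFinset_card', ← SimpleGraph.neighborFinset_def,
    G.card_neighborFinset_eq_degree, hG v]

lemma card_edgeFinset_of_isRegularOfDegree_two (hG : G.IsRegularOfDegree 2) :
    #G.edgeFinset = Fintype.card V := by
  have h := G.sum_degrees_eq_twice_card_edges
  simp only [hG.degree_eq, sum_const, card_univ, smul_eq_mul] at h
  omega

lemma adj_iff_of_isRegularOfDegree_two (hG : G.IsRegularOfDegree 2) {W : Type*} (f : W ≃ V)
    {s : Equiv.Perm W} (hs : ∀ x, s (s x) ≠ x) (hadj : ∀ x, G.Adj (f x) (f (s x))) (x y : W) :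
    G.Adj (f x) (f y) ↔ s x = y ∨ s y = x := by
  classical
  have hadj' : G.Adj (f x) (f (s.symm x)) := by
    simpa only [Equiv.apply_symm_apply] using (hadj (s.symm x)).symm
  have hne : f (s x) ≠ f (s.symm x) := fun h =>
    hs x (by rw [f.injective h, Equiv.apply_symm_apply])
  have neighbors : {f (s x), f (s.symm x)} = G.neighborFinset (f x) := by
    refine eq_of_subset_of_card_le ?_ ?_
    · simp only [insert_subset_iff, singleton_subset_iff, SimpleGraph.mem_neighborFinset]
      exact ⟨hadj x, hadj'⟩
    · rw [G.card_neighborFinset_eq_degree, hG (f x), card_pair hne]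
  rw [← SimpleGraph.mem_neighborFinset, ← neighbors, mem_insert, mem_singleton,
    f.apply_eq_iff_eq, f.apply_eq_iff_eq, Equiv.eq_symm_apply, eq_comm]

theorem exists_equiv_cycleVertex (hG : G.IsRegularOfDegree 2) :
    ∃ (t : ℕ) (n : Fin t → ℕ) (f : CycleVertex n ≃ V), Monotone n ∧ (∀ j, 3 ≤ n j) ∧
      (∀ j, ∃ C : G.ConnectedComponent, C.supp.ncard = n j) ∧
      ∀ x y, G.Adj (f x) (f y) ↔ CycleVertex.next x = y ∨ CycleVertex.next y = x := by
  classical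
  have component (C : G.ConnectedComponent) : ∃ (k : ℕ) (f : Fin k → V), 3 ≤ k ∧
      Function.Injective f ∧ Set.range f = C.supp ∧ ∀ i, G.Adj (f i) (f (finRotate k i)) := by
    obtain ⟨v, hv⟩ := C.nonempty_supp
    have hne : (G.neighborSet v).Nonempty :=
      (G.degree_pos_iff_exists_adj v).1 (by rw [hG v]; norm_num)
    exact exists_fin_supp_of_isCycles (isCycles_of_isRegularOfDegree_two hG) hv hne
  choose k g hk hinj hrange hadj using component
  let e := (Fintype.equivFin G.ConnectedComponent).symm
  let C : Fin _ ≃ G.ConnectedComponent := (Tuple.sort (k ∘ e)).trans e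
  have mk_g (D : G.ConnectedComponent) (i : Fin (k D)) : G.connectedComponentMk (g D i) = D :=
    (hrange D).subset ⟨i, rfl⟩
  let f : CycleVertex (k ∘ C) → V := fun x => g (C x.1) x.2
  have f_bij : Function.Bijective f := by
    constructor
    · rintro ⟨j, i⟩ ⟨j', i'⟩ h
      have hC : C j = C j' :=
        (mk_g (C j) i).symm.trans ((congrArg G.connectedComponentMk h).trans (mk_g (C j') i'))
      obtain rfl : j = j' := C.injective hC
      exact congrArg (Sigma.mk j) (hinj (C j) h)
    · intro v
      obtain ⟨j, hj⟩ := C.surjective (G.connectedComponentMk v)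
      obtain ⟨i, hi⟩ : v ∈ Set.range (g (C j)) := by rw [hrange, hj]; rfl
      exact ⟨⟨j, i⟩, hi⟩
  have ncard_supp (D : G.ConnectedComponent) : D.supp.ncard = k D := by
    rw [← hrange D, ← Set.image_univ, Set.ncard_image_of_injective _ (hinj D), Set.ncard_univ,
      Nat.card_eq_fintype_card, Fintype.card_fin]
  exact ⟨_, k ∘ C, .ofBijective f f_bij, Tuple.monotone_sort (k ∘ e), fun j => hk (C j),
    fun j => ⟨C j, ncard_supp (C j)⟩,
    adj_iff_of_isRegularOfDegree_two hG _ (CycleVertex.next_next_ne fun j => hk (C j))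
      fun x => hadj (C x.1) x.2⟩

end TwoRegular

/-- Every disjoint union of odd cycles (i.e. every 2-regular graph all of whose connected
components have an odd number of vertices) with m edges has an orientation and a bijective
labeling by {1, …, m} with pairwise distinct vertex-sums, all nonzero and of absolute
value at most 2m − 1. -/
theorem disjoint_union_odd_cycles_antimagic_orientation_bounded
    {V : Type*} [Fintype V] [DecidableEq V]
    (G : SimpleGraph V) [DecidableRel G.Adj]
    (hreg : ∀ v : V, G.degree v = 2)
    (hodd : ∀ c : G.ConnectedComponent, Odd c.supp.ncard) :
    ∃ (A : Finset (V × V)) (c : V × V → ℤ),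
      IsOrientation G A ∧
      Set.BijOn c ↑A (Set.Icc 1 (G.edgeFinset.card : ℤ)) ∧
      (Pairwise fun u v : V => vertexSum A c u ≠ vertexSum A c v) ∧
      (∀ u : V, vertexSum A c u ≠ 0) ∧
      (∀ u : V, |vertexSum A c u| ≤ 2 * (G.edgeFinset.card : ℤ) - 1) := by
  obtain ⟨t, n, f, hmono, hn, hsupp, hadj⟩ := exists_equiv_cycleVertex hreg
  have hn_odd (j : Fin t) : Odd (n j) := by
    obtain ⟨C, hC⟩ := hsupp j
    exact hC ▸ hodd C
  rw [card_edgeFinset_of_isRegularOfDegree_two hreg]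
  exact hasBoundedAntimagicOrientation_of_equiv f hadj (CycleVertex.next_next_ne hn)
    (CycleVertex.bijOn_label hn) (CycleVertex.signedSum_label_injective hn hn_odd hmono)
end

section
/- Let G be a finite simple graph with m edges that is a disjoint union of even cycles, and let k ≥ 0 be an integer. Then there exist an orientation D of G and a bijection c from the arc set of D to {k + 1, k + 2, …, k + m} such that the vertex-sums of all vertices of D under c are pairwise distinct and every vertex-sum has absolute value at least 2k + 3. -/
open Finset

/-!
Orient a bipartite graph from one color class to the other: every vertex becomes a source or a sink,
so up to sign its vertex-sum is the sum of the labels of the edges at it. It therefore suffices to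
label the edges by `1, …, m` with distinct sums at the vertices; each sum is then at least
`1 + 2 = 3`, and adding `k` to every label adds `2 * k` to every sum, as each vertex has degree two.

Number the edges around each cycle, and give the cycles consecutive blocks of labels, which
separates the sums of different cycles. Around a cycle of length `n` the labels, up to the offset of
the block, are `1, 0, 2, 3, …, n - 1` in this order. The sums are `1, 2, 5, 7, …, 2 * n - 3`, and
`n` where the cycle closes up; they are distinct because `n` is even.
-/

section Orientation

variable {V : Type*} {G : SimpleGraph V} {A : Finset (V × V)}

lemma IsOrientation.bijOn_edgeSet (hA : IsOrientation G A) :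
    Set.BijOn (fun a : V × V => s(a.1, a.2)) A G.edgeSet := by
  refine ⟨fun a ha => (hA.1 a.1 a.2).2 (.inl ha), ?_, ?_⟩
  · rintro ⟨u, v⟩ huv ⟨u', v'⟩ huv' h
    rcases Sym2.eq_iff.1 h with ⟨rfl, rfl⟩ | ⟨rfl, rfl⟩
    · rfl
    · exact absurd ⟨huv, huv'⟩ (hA.2 _ _)
  · rintro ⟨u, v⟩ huv
    rcases (hA.1 u v).1 huv with h | h
    · exact ⟨(u, v), h, rfl⟩
    · exact ⟨(v, u), h, Sym2.eq_swap⟩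

end Orientation

section Labeling

variable {V : Type*} [Fintype V] (G : SimpleGraph V) [DecidableRel G.Adj]

/-- The sum of the labels of the edges at `v`, for an edge labeling `f`. -/
def labelSum (f : Sym2 V → ℤ) (v : V) : ℤ :=
  ∑ w ∈ G.neighborFinset v, f s(v, w)

/-- An antimagic labeling of a graph with `m` edges: a bijective labeling of the edges by
`1, …, m` for which the sums at the vertices are pairwise distinct. Labels of non-edges are
irrelevant. -/
structure IsAntimagicLabeling (f : Sym2 V → ℤ) : Prop where
  bijOn : Set.BijOn f G.edgeSet (Set.Icc 1 (#G.edgeFinset : ℤ))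
  injective_labelSum : Function.Injective (labelSum G f)

variable {G}

lemma labelSum_const_add (k : ℤ) (f : Sym2 V → ℤ) (v : V) :
    labelSum G (fun e => k + f e) v = G.degree v * k + labelSum G f v := by
  simp [labelSum, sum_add_distrib]

lemma IsAntimagicLabeling.three_le_labelSum {f : Sym2 V → ℤ} (hf : IsAntimagicLabeling G f)
    {v : V} (hv : 2 ≤ G.degree v) : 3 ≤ labelSum G f v := by
  classical
  have hedge {w : V} (hw : w ∈ G.neighborFinset v) : s(v, w) ∈ G.edgeSet :=
    (G.mem_neighborFinset v w).1 hw
  have hpos {w : V} (hw : w ∈ G.neighborFinset v) : 1 ≤ f s(v, w) :=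
    (hf.bijOn.mapsTo (hedge hw)).1
  obtain ⟨a, ha, b, hb, hab⟩ := one_lt_card.1 ((G.card_neighborFinset_eq_degree v).symm ▸ hv)
  have hne : f s(v, a) ≠ f s(v, b) := fun h =>
    hab (Sym2.congr_right.1 (hf.bijOn.injOn (hedge ha) (hedge hb) h))
  calc
    3 ≤ f s(v, a) + f s(v, b) := by have := hpos ha; have := hpos hb; lia
    _ = ∑ w ∈ {a, b}, f s(v, w) := by rw [sum_pair hab]
    _ ≤ labelSum G f v := sum_le_sum_of_subset_of_nonneg (by simp_all [insert_subset_iff])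
        fun w hw _ => zero_le_one.trans (hpos hw)

end Labeling

section BipartiteOrientation

variable {V : Type*} [Fintype V] {G : SimpleGraph V} [DecidableRel G.Adj]

/-- The orientation of a properly 2-colored graph from the `true` vertices to the `false` ones, so
that every vertex is a source or a sink. -/
def bipartiteOrientation (χ : G.Coloring Bool) : Finset (V × V) :=
  {a | G.Adj a.1 a.2 ∧ χ a.1 = true}

lemma mk_mem_bipartiteOrientation {χ : G.Coloring Bool} {u v : V} :
    (u, v) ∈ bipartiteOrientation χ ↔ G.Adj u v ∧ χ u = true := by
  simp [bipartiteOrientation]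

lemma isOrientation_bipartiteOrientation (χ : G.Coloring Bool) :
    IsOrientation G (bipartiteOrientation χ) := by
  simp only [IsOrientation, mk_mem_bipartiteOrientation, G.adj_comm]
  refine ⟨fun u v => ⟨fun h => ?_, by tauto⟩, fun u v ⟨⟨h, hu⟩, _, hv⟩ => ?_⟩
  · have := χ.valid h
    grind
  · exact χ.valid h (hu.trans hv.symm)

variable [DecidableEq V]

lemma filter_fst_eq_bipartiteOrientation (χ : G.Coloring Bool) (u : V) :
    (bipartiteOrientation χ).filter (fun a => a.1 = u) =
      if χ u = true then (G.neighborFinset u).map (.sectR u V) else ∅ := by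
  ext ⟨a, b⟩
  simp only [mem_filter, mk_mem_bipartiteOrientation]
  split_ifs
  · simp only [mem_map, SimpleGraph.mem_neighborFinset, Function.Embedding.sectR_apply,
      Prod.mk.injEq]
    grind
  · simp only [notMem_empty]
    grind

lemma filter_snd_eq_bipartiteOrientation (χ : G.Coloring Bool) (u : V) :
    (bipartiteOrientation χ).filter (fun a => a.2 = u) =
      if χ u = true then ∅ else (G.neighborFinset u).map (.sectL V u) := by
  ext ⟨a, b⟩
  have h : G.Adj a u → χ a ≠ χ u := χ.valid
  simp only [mem_filter, mk_mem_bipartiteOrientation]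
  split_ifs
  · simp only [notMem_empty]
    grind
  · simp only [mem_map, SimpleGraph.mem_neighborFinset, Function.Embedding.sectL_apply,
      Prod.mk.injEq]
    grind [G.adj_comm]

lemma vertexSum_bipartiteOrientation (χ : G.Coloring Bool) (f : Sym2 V → ℤ) (u : V) :
    vertexSum (bipartiteOrientation χ) (fun a => f s(a.1, a.2)) u =
      if χ u = true then -labelSum G f u else labelSum G f u := by
  rw [vertexSum, filter_fst_eq_bipartiteOrientation, filter_snd_eq_bipartiteOrientation, labelSum]
  split_ifs <;> simp [Sym2.eq_swap]

lemma abs_vertexSum_bipartiteOrientation (χ : G.Coloring Bool) (f : Sym2 V → ℤ) (u : V) :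
    |vertexSum (bipartiteOrientation χ) (fun a => f s(a.1, a.2)) u| = |labelSum G f u| := by
  rw [vertexSum_bipartiteOrientation]
  split_ifs
  · exact abs_neg _
  · rfl

end BipartiteOrientation

section CyclicSuccessor

variable {V : Type*} {G : SimpleGraph V} {σ : Equiv.Perm V}

/-- `σ` goes around each cycle of the 2-regular graph `G`: the neighbors of `v` are the two distinct
vertices `σ v` and `σ⁻¹ v`. -/
structure IsCyclicSuccessor (G : SimpleGraph V) (σ : Equiv.Perm V) : Prop where
  adj_iff : ∀ u v, G.Adj u v ↔ σ u = v ∨ σ v = u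
  apply_apply_ne : ∀ v, σ (σ v) ≠ v

namespace IsCyclicSuccessor

lemma adj_apply (hσ : IsCyclicSuccessor G σ) (v : V) : G.Adj v (σ v) :=
  (hσ.adj_iff v (σ v)).2 (.inl rfl)

lemma injective_edge (hσ : IsCyclicSuccessor G σ) :
    Function.Injective fun v => s(v, σ v) := by
  intro u v h
  rcases Sym2.eq_iff.1 h with ⟨huv, -⟩ | ⟨huv, hvu⟩
  · exact huv
  · exact absurd (huv ▸ hvu) (hσ.apply_apply_ne v)

lemma range_edge (hσ : IsCyclicSuccessor G σ) :
    Set.range (fun v => s(v, σ v)) = G.edgeSet := by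
  ext ⟨u, v⟩
  simp only [Set.mem_range, Sym2.eq_iff, SimpleGraph.mem_edgeSet, hσ.adj_iff]
  grind

variable [Fintype V] [DecidableRel G.Adj]

lemma neighborFinset_apply [DecidableEq V] (hσ : IsCyclicSuccessor G σ) (v : V) :
    G.neighborFinset (σ v) = {v, σ (σ v)} := by
  ext w
  simp [hσ.adj_iff, or_comm, eq_comm]

lemma labelSum_apply (hσ : IsCyclicSuccessor G σ) (f : Sym2 V → ℤ) (v : V) :
    labelSum G f (σ v) = f s(v, σ v) + f s(σ v, σ (σ v)) := by
  classical
  rw [labelSum, hσ.neighborFinset_apply, sum_pair (hσ.apply_apply_ne v).symm,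
    Sym2.eq_swap (a := σ v) (b := v)]

lemma card_edgeFinset (hσ : IsCyclicSuccessor G σ) : #G.edgeFinset = Fintype.card V := by
  rw [← Nat.card_eq_fintype_card, ← Set.ncard_range_of_injective hσ.injective_edge,
    hσ.range_edge, ← Set.ncard_coe_finset, SimpleGraph.coe_edgeFinset]

theorem exists_isAntimagicLabeling (hσ : IsCyclicSuccessor G σ) {l : V → ℤ}
    (hl : Set.BijOn l Set.univ (Set.Icc 1 (Fintype.card V : ℤ)))
    (hsum : Function.Injective fun v => l v + l (σ v)) :
    ∃ f, IsAntimagicLabeling G f := by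
  let f := Function.extend (fun v => s(v, σ v)) l 0
  have hf (v : V) : f s(v, σ v) = l v := hσ.injective_edge.extend_apply l 0 v
  refine ⟨f, ?_, ?_⟩
  · rw [hσ.card_edgeFinset, ← hσ.range_edge, ← Set.image_univ]
    refine (Set.bijOn_comp_iff hσ.injective_edge.injOn).1 ?_
    simpa only [Function.comp_def, hf] using hl
  · refine (Function.Injective.of_comp_iff' _ σ.bijective).1 ?_
    simpa only [Function.comp_def, hσ.labelSum_apply, hf] using hsum

lemma of_forall_adj (hreg : ∀ v, G.degree v = 2) (hadj : ∀ v, G.Adj v (σ v))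
    (hσσ : ∀ v, σ (σ v) ≠ v) : IsCyclicSuccessor G σ := by
  classical
  refine ⟨fun u v => ⟨fun huv => ?_, ?_⟩, hσσ⟩
  · have hsub : {σ u, σ.symm u} ⊆ G.neighborFinset u := by
      have hpred : G.Adj (σ.symm u) u := by simpa using hadj (σ.symm u)
      simp [insert_subset_iff, hadj, hpred.symm]
    have hne : σ u ≠ σ.symm u := fun h => hσσ u (by simp [h])
    have hN := eq_of_subset_of_card_le hsub (by simp [hreg, card_pair hne])
    have hv : v ∈ ({σ u, σ.symm u} : Finset V) := by simpa [hN] using huv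
    simpa [Equiv.eq_symm_apply, eq_comm] using hv
  · rintro (rfl | rfl)
    exacts [hadj u, (hadj v).symm]

end IsCyclicSuccessor

end CyclicSuccessor

section CyclicCoordinates

variable {V : Type*} {G : SimpleGraph V}

/-- A numbering of the vertices of each component `C` of a 2-regular graph by `0, …, |C| - 1` in
cyclic order, together with the corresponding cyclic successor `next`. -/
structure CyclicCoordinates (G : SimpleGraph V) where
  next : Equiv.Perm V
  pos : V → ℕ
  isCyclicSuccessor : IsCyclicSuccessor G next
  pos_lt : ∀ v, pos v < (G.connectedComponentMk v).supp.ncard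
  pos_next : ∀ v, pos (next v) = (pos v + 1) % (G.connectedComponentMk v).supp.ncard
  ext : ∀ {u v}, G.connectedComponentMk u = G.connectedComponentMk v → pos u = pos v → u = v

namespace CyclicCoordinates

lemma connectedComponentMk_next (X : CyclicCoordinates G) (v : V) :
    G.connectedComponentMk (X.next v) = G.connectedComponentMk v :=
  (SimpleGraph.ConnectedComponent.connectedComponentMk_eq_of_adj
    (X.isCyclicSuccessor.adj_apply v)).symm

lemma three_le_ncard_supp (X : CyclicCoordinates G) (v : V) :
    3 ≤ (G.connectedComponentMk v).supp.ncard := by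
  by_contra! hlt
  refine X.isCyclicSuccessor.apply_apply_ne v (X.ext ?_ ?_)
  · simp only [connectedComponentMk_next]
  · have hpos := X.pos_lt v
    rw [X.pos_next, connectedComponentMk_next, X.pos_next]
    interval_cases (G.connectedComponentMk v).supp.ncard <;> lia

/-- Alternate the two colors around each of the even cycles. -/
def parityColoring (X : CyclicCoordinates G)
    (heven : ∀ C : G.ConnectedComponent, Even C.supp.ncard) : G.Coloring Bool :=
  .mk (fun v => decide (Even (X.pos v))) <| by
    have hnext (v : V) : Even (X.pos (X.next v)) ↔ ¬ Even (X.pos v) := by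
      rw [X.pos_next, ← Nat.even_add_one, Nat.even_iff, Nat.even_iff,
        Nat.mod_mod_of_dvd _ (heven _).two_dvd]
    intro u v huv
    rcases (X.isCyclicSuccessor.adj_iff u v).1 huv with rfl | rfl <;>
      simp [hnext, -Nat.not_even_iff_odd]

variable [Fintype V] [DecidableRel G.Adj]

lemma nonempty_of_forall_adj (hreg : ∀ v, G.degree v = 2) {next : V → V} {pos : V → ℕ}
    (hadj : ∀ v, G.Adj v (next v))
    (hthree : ∀ v, 3 ≤ (G.connectedComponentMk v).supp.ncard)
    (hpos : ∀ v, pos v < (G.connectedComponentMk v).supp.ncard)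
    (hpos_next : ∀ v, pos (next v) = (pos v + 1) % (G.connectedComponentMk v).supp.ncard)
    (hext : ∀ {u v}, G.connectedComponentMk u = G.connectedComponentMk v → pos u = pos v → u = v) :
    Nonempty (CyclicCoordinates G) := by
  have hcomp (v : V) : G.connectedComponentMk (next v) = G.connectedComponentMk v :=
    (SimpleGraph.ConnectedComponent.connectedComponentMk_eq_of_adj (hadj v)).symm
  have hnext_inj : Function.Injective next := by
    intro u v huv
    have hK : G.connectedComponentMk u = G.connectedComponentMk v := by
      rw [← hcomp u, huv, hcomp]
    have hmod : pos u + 1 ≡ pos v + 1 [MOD (G.connectedComponentMk v).supp.ncard] := by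
      rw [Nat.ModEq, ← hpos_next v, ← huv, hpos_next u, hK]
    exact hext hK (hmod.add_right_cancel'.eq_of_lt_of_lt (hK ▸ hpos u) (hpos v))
  have hnext_next (v : V) : next (next v) ≠ v := by
    intro h
    have hmod : pos v + 2 ≡ pos v + 0 [MOD (G.connectedComponentMk v).supp.ncard] := by
      have hpos_eq : pos v = (pos v + 2) % (G.connectedComponentMk v).supp.ncard := by
        conv_lhs => rw [← h, hpos_next, hcomp, hpos_next, Nat.mod_add_mod]
      rw [Nat.ModEq, ← hpos_eq, add_zero, Nat.mod_eq_of_lt (hpos v)]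
    have hdvd := Nat.modEq_zero_iff_dvd.1 hmod.add_left_cancel'
    exact (Nat.le_of_dvd two_pos hdvd).not_gt (hthree v)
  exact ⟨.ofBijective next (Finite.injective_iff_bijective.1 hnext_inj), pos,
    .of_forall_adj hreg hadj hnext_next, hpos, hpos_next, hext⟩

end CyclicCoordinates

variable [Fintype V] [DecidableRel G.Adj]

lemma exists_bijOn_component_supp (hreg : ∀ v, G.degree v = 2) (C : G.ConnectedComponent) :
    3 ≤ C.supp.ncard ∧ ∃ x : ℕ → V, Set.BijOn x (Set.Iio C.supp.ncard) C.supp ∧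
      ∀ i < C.supp.ncard, G.Adj (x i) (x ((i + 1) % C.supp.ncard)) := by
  have hG : G.IsCycles := fun v _ => by
    rw [Set.ncard_eq_toFinset_card', ← hreg v]
    rfl
  obtain ⟨v, hv⟩ := C.nonempty_supp
  have hne : (G.neighborSet v).Nonempty := (G.degree_pos_iff_exists_adj v).1 (by simp [hreg])
  obtain ⟨p, hp, hsupp⟩ := hG.exists_cycle_toSubgraph_verts_eq_connectedComponentSupp hv hne
  have hlen : 3 ≤ p.length := hp.three_le_length
  have hbij : Set.BijOn p.getVert (Set.Iio p.length) C.supp := by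
    have hinj := hp.getVert_injOn'.mono fun i hi => Nat.le_sub_one_of_lt hi
    refine ⟨fun i _ => ?_, hinj, fun w hw => ?_⟩
    · rw [← hsupp, SimpleGraph.Walk.mem_verts_toSubgraph]
      exact p.getVert_mem_support i
    · rw [← hsupp, SimpleGraph.Walk.mem_verts_toSubgraph,
        SimpleGraph.Walk.mem_support_iff_exists_getVert] at hw
      obtain ⟨i, rfl, hi⟩ := hw
      rcases hi.lt_or_eq with hi | rfl
      · exact ⟨i, hi, rfl⟩
      · exact ⟨0, Nat.zero_lt_of_lt hlen, by simp⟩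
  have hcard : C.supp.ncard = p.length := by simp [← hbij.ncard_eq]
  rw [hcard]
  refine ⟨hlen, p.getVert, hbij, fun i hi => ?_⟩
  have hadj := p.adj_getVert_succ hi
  rcases (Nat.succ_le_of_lt hi).lt_or_eq with hi' | hi'
  · rwa [Nat.mod_eq_of_lt hi']
  · rw [← Nat.succ_eq_add_one, hi', p.getVert_length] at hadj
    rwa [← Nat.succ_eq_add_one, hi', Nat.mod_self, p.getVert_zero]

theorem nonempty_cyclicCoordinates (hreg : ∀ v, G.degree v = 2) :
    Nonempty (CyclicCoordinates G) := by
  choose hthree x hx hx_adj using exists_bijOn_component_supp hreg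
  let K := G.connectedComponentMk
  let n (v : V) := (K v).supp.ncard
  choose pos hpos hx_pos using fun v => (hx (K v)).surjOn (show v ∈ (K v).supp from rfl)
  let next (v : V) := x (K v) ((pos v + 1) % n v)
  have hmod (v : V) : (pos v + 1) % n v < n v := Nat.mod_lt _ (Nat.zero_lt_of_lt (hpos v))
  have hK_next (v : V) : K (next v) = K v := (hx (K v)).mapsTo (hmod v)
  refine CyclicCoordinates.nonempty_of_forall_adj hreg (next := next) (pos := pos)
    (fun v => ?_) (fun v => hthree (K v)) hpos (fun v => ?_) fun {u v} hK huv => ?_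
  · simpa only [hx_pos] using hx_adj (K v) (pos v) (hpos v)
  · have hx_next : x (K v) (pos (next v)) = next v := by rw [← hK_next v, hx_pos]
    exact (hx (K v)).injOn (hK_next v ▸ hpos (next v)) (hmod v) hx_next
  · replace hK : K u = K v := hK
    rw [← hx_pos u, ← hx_pos v, huv, hK]

end CyclicCoordinates

section VertexLabeling

/-- The vertex labels `1, 0, 2, 3, …, n - 1` around a cycle of length `n`. Adjacent labels then add
up to `1, 2, 5, 7, …, 2 * n - 3` and, between the two ends, to `n`. -/
def cycleLabel : Equiv.Perm ℕ := Equiv.swap 0 1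

lemma cycleLabel_lt {n i : ℕ} (hn : 2 ≤ n) (hi : i < n) : cycleLabel i < n := by
  rw [cycleLabel, Equiv.swap_apply_def]
  split_ifs <;> lia

lemma cycleLabel_add_cycleLabel_succ_mod {n i : ℕ} (hn : 3 ≤ n) (hi : i < n) :
    cycleLabel i + cycleLabel ((i + 1) % n) =
      if i + 1 = n then n else if i = 1 then 2 else 2 * i + 1 := by
  rcases (Nat.succ_le_of_lt hi).lt_or_eq with hi' | rfl
  · rw [Nat.mod_eq_of_lt hi']
    simp only [cycleLabel, Equiv.swap_apply_def]
    split_ifs <;> lia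
  · rw [Nat.succ_eq_add_one, Nat.mod_self]
    simp only [cycleLabel, Equiv.swap_apply_def]
    split_ifs <;> lia

lemma injOn_cycleLabel_add_cycleLabel_succ_mod {n : ℕ} (hn : 3 ≤ n) (heven : Even n) :
    Set.InjOn (fun i => cycleLabel i + cycleLabel ((i + 1) % n)) (Set.Iio n) := by
  intro i hi j hj hij
  simp only [cycleLabel_add_cycleLabel_succ_mod hn hi, cycleLabel_add_cycleLabel_succ_mod hn hj]
    at hij
  obtain ⟨m, rfl⟩ := heven
  split_ifs at hij <;> lia

lemma exists_block_offset {V I : Type*} [Finite V] (K : V → I) :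
    ∃ a : I → ℕ, (∀ i, a i + {v | K v = i}.ncard ≤ Nat.card V) ∧
      ∀ i j, i ≠ j → a i + {v | K v = i}.ncard ≤ a j ∨ a j + {v | K v = j}.ncard ≤ a i := by
  classical
  let _ : LinearOrder I := linearOrderOfSTO WellOrderingRel
  have hsum (i : I) : {v | K v < i}.ncard + {v | K v = i}.ncard = {v | K v ≤ i}.ncard := by
    rw [← Set.ncard_union_eq (Set.disjoint_left.2 fun v hlt heq => hlt.ne heq)]
    simp only [le_iff_lt_or_eq, Set.ofPred_or]
  have hmono {i j : I} (hij : i < j) : {v | K v ≤ i}.ncard ≤ {v | K v < j}.ncard :=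
    Set.ncard_le_ncard fun v hv => lt_of_le_of_lt hv hij
  refine ⟨fun i => {v | K v < i}.ncard, fun i => ?_, fun i j hij => ?_⟩
  · exact (hsum i).trans_le (Set.ncard_le_card _)
  · simp only [hsum]
    exact hij.lt_or_gt.imp hmono hmono

lemma bijOn_Icc_card_of_injective {V : Type*} [Fintype V] {l : V → ℤ} (hl : Function.Injective l)
    (hmem : ∀ v, l v ∈ Set.Icc 1 (Fintype.card V : ℤ)) :
    Set.BijOn l Set.univ (Set.Icc 1 (Fintype.card V : ℤ)) := by
  rw [← coe_univ, ← coe_Icc]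
  have hmaps : Set.MapsTo l (univ : Finset V) (Icc 1 (Fintype.card V : ℤ)) := fun v _ => by
    simpa using hmem v
  exact ⟨hmaps, hl.injOn, surjOn_of_injOn_of_card_le l hmaps hl.injOn (by simp)⟩

lemma exists_bijOn_Icc_injective_add {V I : Type*} [Fintype V] {K : V → I} {next : V → V}
    {t : V → ℕ} (hK_next : ∀ v, K (next v) = K v) (ht_lt : ∀ v, t v < {w | K w = K v}.ncard)
    (ht : ∀ u v, K u = K v → t u = t v → u = v)
    (ht_add : ∀ u v, K u = K v → t u + t (next u) = t v + t (next v) → u = v) :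
    ∃ l : V → ℤ, Set.BijOn l Set.univ (Set.Icc 1 (Fintype.card V : ℤ)) ∧
      Function.Injective fun v => l v + l (next v) := by
  obtain ⟨a, ha_card, ha_disj⟩ := exists_block_offset K
  let l (v : V) : ℤ := a (K v) + 1 + t v
  have hl_mem (v : V) :
      a (K v) + 1 ≤ l v ∧ l v ≤ a (K v) + {w | K w = K v}.ncard := by
    have := ht_lt v
    constructor <;> lia
  have hl_next_mem (v : V) :
      a (K v) + 1 ≤ l (next v) ∧ l (next v) ≤ a (K v) + {w | K w = K v}.ncard := by
    simpa only [hK_next] using hl_mem (next v)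
  refine ⟨l, bijOn_Icc_card_of_injective (fun u v huv => ?_) fun v => ?_, fun u v huv => ?_⟩
  · by_cases hK : K u = K v
    · exact ht u v hK (by simpa [l, hK] using huv)
    · have hu := hl_mem u
      have hv := hl_mem v
      have hdisj := ha_disj _ _ hK
      lia
  · have hv := hl_mem v
    have hcard := ha_card (K v)
    rw [Nat.card_eq_fintype_card] at hcard
    constructor <;> lia
  · by_cases hK : K u = K v
    · simp only [l, hK_next, hK] at huv
      exact ht_add u v hK (by lia)
    · have hu := hl_mem u
      have hu' := hl_next_mem u
      have hv := hl_mem v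
      have hv' := hl_next_mem v
      have hdisj := ha_disj _ _ hK
      lia

theorem CyclicCoordinates.exists_vertexLabeling {V : Type*} [Fintype V] {G : SimpleGraph V}
    (X : CyclicCoordinates G) (heven : ∀ C : G.ConnectedComponent, Even C.supp.ncard) :
    ∃ l : V → ℤ, Set.BijOn l Set.univ (Set.Icc 1 (Fintype.card V : ℤ)) ∧
      Function.Injective fun v => l v + l (X.next v) := by
  refine exists_bijOn_Icc_injective_add (K := G.connectedComponentMk)
    (t := fun v => cycleLabel (X.pos v)) X.connectedComponentMk_next
    (fun v => cycleLabel_lt (Nat.le_of_succ_le (X.three_le_ncard_supp v)) (X.pos_lt v))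
    (fun u v hK huv => X.ext hK (cycleLabel.injective huv)) fun u v hK huv => ?_
  have hu_lt : X.pos u < (G.connectedComponentMk v).supp.ncard := hK ▸ X.pos_lt u
  simp only [X.pos_next, hK] at huv
  exact X.ext hK <| injOn_cycleLabel_add_cycleLabel_succ_mod (X.three_le_ncard_supp v) (heven _)
    hu_lt (X.pos_lt v) huv

end VertexLabeling

theorem disjoint_union_even_cycles_shifted_labeling_general
    {V : Type*} [Fintype V] [DecidableEq V]
    (G : SimpleGraph V) [DecidableRel G.Adj]
    (hreg : ∀ v : V, G.degree v = 2)
    (heven : ∀ c : G.ConnectedComponent, Even c.supp.ncard) :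
    ∃ (A : Finset (V × V)) (c : V × V → ℤ),
      IsOrientation G A ∧
      Set.BijOn c ↑A (Set.Icc 1 (G.edgeFinset.card : ℤ)) ∧
      ∀ k : ℤ, -1 ≤ k →
        (Function.Injective fun u : V => |vertexSum A (fun a => k + c a) u|) ∧
        ∀ u : V, 2 * k + 3 ≤ |vertexSum A (fun a => k + c a) u| := by
  obtain ⟨X⟩ := nonempty_cyclicCoordinates hreg
  obtain ⟨l, hl, hsum⟩ := X.exists_vertexLabeling heven
  obtain ⟨f, hf⟩ := X.isCyclicSuccessor.exists_isAntimagicLabeling hl hsum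
  let χ := X.parityColoring heven
  have hA := isOrientation_bipartiteOrientation χ
  refine ⟨bipartiteOrientation χ, fun a => f s(a.1, a.2), hA, hf.bijOn.comp hA.bijOn_edgeSet,
    fun k hk => ?_⟩
  have hthree (u : V) : 3 ≤ labelSum G f u := hf.three_le_labelSum (hreg u).ge
  have habs (u : V) : |vertexSum (bipartiteOrientation χ) (fun a => k + f s(a.1, a.2)) u| =
      2 * k + labelSum G f u := by
    rw [abs_vertexSum_bipartiteOrientation χ (fun e => k + f e), labelSum_const_add, hreg]
    exact abs_of_nonneg (by have := hthree u; push_cast; lia)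
  simp only [habs]
  exact ⟨(add_right_injective (2 * k)).comp hf.injective_labelSum,
    fun u => add_le_add_right (hthree u) (2 * k)⟩

/-- Every disjoint union of even cycles with m edges admits, for every integer k ≥ 0, an
orientation and a bijective labeling by {k + 1, …, k + m} with pairwise distinct
vertex-sums, all of absolute value at least 2k + 3. -/
theorem disjoint_union_even_cycles_shifted_labeling
    {V : Type*} [Fintype V] [DecidableEq V]
    (G : SimpleGraph V) [DecidableRel G.Adj]
    (hreg : ∀ v : V, G.degree v = 2)
    (heven : ∀ c : G.ConnectedComponent, Even c.supp.ncard)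
    (k : ℕ) :
    ∃ (A : Finset (V × V)) (c : V × V → ℤ),
      IsOrientation G A ∧
      Set.BijOn c ↑A (Set.Icc ((k : ℤ) + 1) ((k : ℤ) + (G.edgeFinset.card : ℤ))) ∧
      (Pairwise fun u v : V => vertexSum A c u ≠ vertexSum A c v) ∧
      (∀ u : V, 2 * (k : ℤ) + 3 ≤ |vertexSum A c u|) := by
  obtain ⟨A, c, hA, hc, h⟩ := disjoint_union_even_cycles_shifted_labeling_general G hreg heven
  obtain ⟨hinj, hbound⟩ := h k (by lia)
  have hshift := (add_right_injective (k : ℤ)).injOn.bijOn_image.comp hc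
  rw [Set.image_const_add_Icc] at hshift
  exact ⟨A, _, hA, hshift, fun u v huv h => huv (hinj (congrArg abs h)), hbound⟩
end

section
/- Let C be a cycle on m ≥ 3 vertices and let R be a set of n of its vertices with 2 ≤ n ≤ m. Then there exist an orientation D of C and a bijection c from the arc set of D to {1, 2, …, m} such that: every vertex of C not in R has vertex-sum equal to −1; the vertex-sums of the vertices in R are pairwise distinct and nonzero; and any two distinct vertices u, v ∈ R whose vertex-sums have the same sign satisfy |s(u) − s(v)| ≥ 2, where s denotes vertex-sum. -/
open Finset

/-!
Number the vertices of the cycle so that consecutive numbers are adjacent, and give the edge from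
`j - 1` to `j` a signed label `s (j - 1)`, a negative sign meaning that the arc is reversed; the
vertex-sum of `j` is then `s (j - 1) - s j`. Dropping at most one vertex from `R`, assume that `R`
is even, so that it cuts the cycle into an even number of segments, and let the sign alternate from
one segment to the next. Each segment receives a block of consecutive labels, along which the
signed labels increase by one: the vertices outside `R` have sum `-1`. At a vertex of `R` the sum
is, up to sign, the sum of the two labels meeting there. Ordering the blocks around the cycle as
`0, 2, 4, …, 5, 3, 1` makes the pairs of blocks meeting at vertices of equal sign increase strictly
in both entries, so the sums of two such vertices differ by at least two. All these sums are at
least `3` in absolute value, so the dropped vertex, whose sum is `-1`, does no harm.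
-/

section Zigzag

/-- The order in which the segments of the cycle receive their blocks of labels: for
`k = 0, 1, …, n - 1` the values are `0, 2, 4, …, 5, 3, 1`. Truncated subtraction makes
`zigzag n n = 0`, so the sequence closes up cyclically. -/
def zigzag (n k : ℕ) : ℕ :=
  min (2 * k) (2 * (n - k) - 1)

lemma zigzag_injOn (n : ℕ) : Set.InjOn (zigzag n) (Set.Iio n) := by
  intro a ha b hb h
  simp only [Set.mem_Iio, zigzag] at ha hb h
  omega

lemma zigzag_mod {n k : ℕ} (hk : k ≤ n) : zigzag n (k % n) = zigzag n k := by
  obtain rfl | hk := hk.eq_or_lt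
  · simp [zigzag]
  · rw [Nat.mod_eq_of_lt hk]

/-- The position of the pair `{zigzag n k, zigzag n (k + 1)}` in the chain
`{0, 1}, {0, 2}, {1, 3}, {2, 4}, …, {n - 2, n - 1}` of all pairs of consecutive values. -/
def zigzagPos (n k : ℕ) : ℕ :=
  min (2 * k + 1) (2 * (n - (k + 1)))

lemma zigzagPos_injOn (n : ℕ) : Set.InjOn (zigzagPos n) (Set.Iio n) := by
  intro a ha b hb h
  simp only [Set.mem_Iio, zigzagPos] at ha hb h
  omega

variable {n a b : ℕ}

lemma min_zigzag_succ (hn : Even n) (ha : a < n) :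
    min (zigzag n a) (zigzag n (a + 1)) = zigzagPos n a - 1 := by
  obtain ⟨h, rfl⟩ := hn
  unfold zigzag zigzagPos
  omega

lemma max_zigzag_succ (hn : Even n) (ha : a < n) :
    max (zigzag n a) (zigzag n (a + 1)) = min (zigzagPos n a + 1) (n - 1) := by
  obtain ⟨h, rfl⟩ := hn
  unfold zigzag zigzagPos
  omega

lemma zigzag_pair_lt (hn : Even n) (ha : a < n) (hb : b < n) (hpar : Even a ↔ Even b)
    (hlt : zigzagPos n a < zigzagPos n b) :
    min (zigzag n a) (zigzag n (a + 1)) < min (zigzag n b) (zigzag n (b + 1)) ∧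
      max (zigzag n a) (zigzag n (a + 1)) < max (zigzag n b) (zigzag n (b + 1)) := by
  rw [min_zigzag_succ hn ha, min_zigzag_succ hn hb, max_zigzag_succ hn ha, max_zigzag_succ hn hb]
  obtain ⟨h, rfl⟩ := hn
  unfold zigzagPos at *
  rw [Nat.even_iff, Nat.even_iff] at hpar
  omega

end Zigzag

section Ranking

variable {ι α : Type*} [LinearOrder α]

lemma exists_bijOn_Icc_of_injective_key [Fintype ι] {key : ι → α}
    (hkey : Function.Injective key) :
    ∃ L : ι → ℤ, Set.BijOn L Set.univ (Set.Icc 1 (Fintype.card ι : ℤ)) ∧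
      (∀ i j, key i < key j → L i < L j) ∧ ∀ i j, key i ⋖ key j → L j = L i + 1 := by
  let := LinearOrder.lift' key hkey
  let e : ι ≃o Fin (Fintype.card ι) := (monoEquivOfFin ι rfl).symm
  refine ⟨fun i => (e i : ℕ) + 1, ⟨fun i _ => ?_, fun i _ j _ hij => ?_, fun l hl => ?_⟩,
    fun i j hij => ?_, fun i j hij => ?_⟩
  · simp only [Set.mem_Icc]
    omega
  · exact e.injective (Fin.ext (by simpa using hij))
  · obtain ⟨k, rfl⟩ : ∃ k : ℕ, l = k + 1 := ⟨(l - 1).toNat, by grind⟩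
    exact ⟨e.symm ⟨k, by grind⟩, Set.mem_univ _, by simp⟩
  · have : e i < e j := e.lt_iff_lt.2 hij
    simpa using this
  · have hcov : i ⋖ j := ⟨hij.1, fun k => hij.2 (c := key k)⟩
    have hsucc := Nat.covBy_iff_add_one_eq.1 (Fin.covBy_iff.1 ((apply_covBy_apply_iff e).2 hcov))
    simp [← hsucc]

lemma add_add_two_le_of_pair_lt {r : ι → α} {L : ι → ℤ}
    (hL : ∀ i j, r i < r j → L i < L j) {a b c d : ι}
    (hmin : min (r a) (r b) < min (r c) (r d)) (hmax : max (r a) (r b) < max (r c) (r d)) :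
    L a + L b + 2 ≤ L c + L d := by
  rcases le_total (r a) (r b) with hab | hab <;> rcases le_total (r c) (r d) with hcd | hcd <;>
    simp only [min_eq_left, min_eq_right, max_eq_left, max_eq_right, hab, hcd] at hmin hmax <;>
    linarith [hL _ _ hmin, hL _ _ hmax]

end Ranking

/-- The separation property of the vertex-sums `x` for the set `R` of real vertices, with nonzero
sharpened to absolute value at least `3`, so that `R` may later be enlarged by a vertex of
value `-1`. -/
structure IsSeparatedOn {V : Type*} (x : V → ℤ) (R : Finset V) : Prop where
  eq_neg_one_of_notMem : ∀ v ∉ R, x v = -1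
  three_le_abs : ∀ v ∈ R, 3 ≤ |x v|
  gap : (R : Set V).Pairwise fun u v => 0 < x u * x v → 2 ≤ |x u - x v|

namespace IsSeparatedOn

variable {V W : Type*} {x : V → ℤ} {S R : Finset V}

lemma of_map (e : V ≃ W) (h : IsSeparatedOn (x ∘ e.symm) (S.map e.toEmbedding)) :
    IsSeparatedOn x S where
  eq_neg_one_of_notMem v hv := by simpa using h.eq_neg_one_of_notMem (e v) (by simpa using hv)
  three_le_abs v hv := by simpa using h.three_le_abs (e v) (by simpa using hv)
  gap u hu v hv huv := by
    simpa using h.gap (mem_map_of_mem _ hu) (mem_map_of_mem _ hv) (e.injective.ne huv)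

lemma ne_zero (h : IsSeparatedOn x S) (v : V) : x v ≠ 0 := by
  by_cases hv : v ∈ S
  · exact fun h0 => by simpa [h0] using h.three_le_abs v hv
  · simp [h.eq_neg_one_of_notMem v hv]

lemma gap_of_notMem (h : IsSeparatedOn x S) {u v : V} (hu : u ∈ S) (hv : v ∉ S) :
    2 ≤ |x u - x v| := by
  have := h.three_le_abs u hu
  rw [h.eq_neg_one_of_notMem v hv]
  grind

lemma gap_of_card_sdiff_le_one [DecidableEq V] (h : IsSeparatedOn x S) (hR : #(R \ S) ≤ 1) :
    (R : Set V).Pairwise fun u v => 0 < x u * x v → 2 ≤ |x u - x v| := by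
  intro u hu v hv huv hsign
  by_cases huS : u ∈ S <;> by_cases hvS : v ∈ S
  · exact h.gap huS hvS huv hsign
  · exact h.gap_of_notMem huS hvS
  · rw [abs_sub_comm]
    exact h.gap_of_notMem hvS huS
  · exact absurd (card_le_one.1 hR u (mem_sdiff.2 ⟨hu, huS⟩) v (mem_sdiff.2 ⟨hv, hvS⟩)) huv

end IsSeparatedOn

section Segment

variable {N : ℕ} {S : Finset (Fin (N + 1))} {i j : Fin (N + 1)}

/-- The index of the segment containing the edge from `j` to `j + 1`, when the cyclically ordered
vertices `Fin (N + 1)` are cut at the points of a set `S ∋ 0`. -/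
def segmentIndex (S : Finset (Fin (N + 1))) (j : Fin (N + 1)) : ℕ :=
  #(S ∩ Ioc 0 j)

lemma segmentIndex_zero : segmentIndex S 0 = 0 := by
  simp [segmentIndex]

lemma segmentIndex_last (h0 : 0 ∈ S) : segmentIndex S (Fin.last N) + 1 = #S := by
  have : S ∩ Ioc 0 (Fin.last N) = S.erase 0 := by
    ext i
    simp [Fin.le_last, Fin.pos_iff_ne_zero, and_comm]
  rw [segmentIndex, this, card_erase_add_one h0]

lemma segmentIndex_lt_card (h0 : 0 ∈ S) (j : Fin (N + 1)) : segmentIndex S j < #S :=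
  card_lt_card <| (ssubset_iff_of_subset inter_subset_left).2 ⟨0, h0, by simp⟩

lemma segmentIndex_lt_segmentIndex (hij : i < j) (hj : j ∈ S) :
    segmentIndex S i < segmentIndex S j :=
  card_lt_card <| (ssubset_iff_of_subset
    (inter_subset_inter_left (Ioc_subset_Ioc_right hij.le))).2
    ⟨j, by simp [hj, (Fin.zero_le i).trans_lt hij], by simp [hij]⟩

lemma segmentIndex_injOn : Set.InjOn (segmentIndex S) S := by
  intro i hi j hj h
  by_contra hne
  rcases lt_or_gt_of_ne hne with hlt | hlt
  · exact (segmentIndex_lt_segmentIndex hlt hj).ne h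
  · exact (segmentIndex_lt_segmentIndex hlt hi).ne' h

lemma Ioc_zero_succ (i : Fin N) : Ioc 0 i.succ = insert i.succ (Ioc 0 i.castSucc) := by
  ext k
  simp only [mem_Ioc, mem_insert, Fin.lt_def, Fin.le_def, Fin.ext_iff, Fin.val_succ,
    Fin.val_castSucc, Fin.val_zero]
  omega

lemma succ_sub_one (i : Fin N) : i.succ - 1 = i.castSucc := by
  rw [← Fin.coeSucc_eq_succ, add_sub_cancel_right]

lemma segmentIndex_of_notMem (h0 : 0 ∈ S) (hj : j ∉ S) :
    segmentIndex S j = segmentIndex S (j - 1) := by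
  cases j using Fin.cases with
  | zero => exact absurd h0 hj
  | succ i =>
    rw [succ_sub_one, segmentIndex, segmentIndex, Ioc_zero_succ, inter_insert_of_notMem hj]

lemma segmentIndex_of_mem (h0 : 0 ∈ S) (hj : j ∈ S) :
    segmentIndex S j = (segmentIndex S (j - 1) + 1) % #S := by
  cases j using Fin.cases with
  | zero =>
    rw [sub_eq_of_eq_add (Fin.last_add_one N).symm, segmentIndex_last h0, Nat.mod_self,
      segmentIndex_zero]
  | succ i =>
    have hsucc : segmentIndex S i.succ = segmentIndex S i.castSucc + 1 := by
      rw [segmentIndex, segmentIndex, Ioc_zero_succ, inter_insert_of_mem hj,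
        card_insert_of_notMem (by simp)]
    rw [succ_sub_one, ← hsucc, Nat.mod_eq_of_lt (segmentIndex_lt_card h0 _)]

lemma even_segmentIndex_sub_one_iff (h0 : 0 ∈ S) (hS : Even #S) (hj : j ∈ S) :
    Even (segmentIndex S (j - 1)) ↔ ¬Even (segmentIndex S j) := by
  rw [segmentIndex_of_mem h0 hj, Nat.even_iff (n := _ % _), Nat.mod_mod_of_dvd _ hS.two_dvd,
    ← Nat.even_iff, Nat.even_add_one, not_not]

lemma neg_one_pow_segmentIndex_sub_one (h0 : 0 ∈ S) (hS : Even #S) (hj : j ∈ S) :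
    (-1 : ℤ) ^ segmentIndex S (j - 1) = -(-1) ^ segmentIndex S j := by
  have hpar : Even (segmentIndex S (j - 1)) ↔ Even (segmentIndex S j + 1) := by
    rw [even_segmentIndex_sub_one_iff h0 hS hj, Nat.even_add_one]
  rw [neg_one_pow_congr hpar, pow_succ, mul_neg_one]

/-- The rank of the segment containing the edge from `j` to `j + 1`, in the order in which the
segments receive their labels. -/
def segmentRank (S : Finset (Fin (N + 1))) (j : Fin (N + 1)) : ℕ :=
  zigzag S.card (segmentIndex S j)

lemma segmentRank_of_mem (h0 : 0 ∈ S) (hj : j ∈ S) :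
    segmentRank S j = zigzag S.card (segmentIndex S (j - 1) + 1) := by
  rw [segmentRank, segmentIndex_of_mem h0 hj, zigzag_mod (segmentIndex_lt_card h0 _)]

/-- The sort key by which the edges of the cycle are labeled: first the rank of the
segment, then the position within it, ascending or descending according to the sign of the
segment. -/
def segmentKey (S : Finset (Fin (N + 1))) (j : Fin (N + 1)) : ℕ ×ₗ ℤ :=
  toLex (segmentRank S j, (-1) ^ segmentIndex S j * (j : ℕ))

lemma segmentKey_injective (h0 : 0 ∈ S) : Function.Injective (segmentKey S) := by
  intro i j h
  obtain ⟨hz, hpos⟩ := Prod.mk.inj (toLex.injective h)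
  rw [zigzag_injOn S.card (segmentIndex_lt_card h0 i) (segmentIndex_lt_card h0 j) hz] at hpos
  simpa [Fin.val_inj] using hpos

lemma segmentKey_covBy_of_even (h0 : 0 ∈ S) (hj : j ∉ S) (heven : Even (segmentIndex S j)) :
    segmentKey S (j - 1) ⋖ segmentKey S j := by
  cases j using Fin.cases with
  | zero => exact absurd h0 hj
  | succ i =>
    refine Prod.Lex.toLex_covBy_toLex_iff.2 (.inl ?_)
    rw [segmentRank, segmentRank, ← segmentIndex_of_notMem h0 hj, heven.neg_one_pow, succ_sub_one]
    simp [Order.covBy_iff_add_one_eq]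

lemma segmentKey_covBy_of_odd (h0 : 0 ∈ S) (hj : j ∉ S) (hodd : Odd (segmentIndex S j)) :
    segmentKey S j ⋖ segmentKey S (j - 1) := by
  cases j using Fin.cases with
  | zero => exact absurd h0 hj
  | succ i =>
    refine Prod.Lex.toLex_covBy_toLex_iff.2 (.inl ?_)
    rw [segmentRank, segmentRank, ← segmentIndex_of_notMem h0 hj, hodd.neg_one_pow, succ_sub_one]
    simp [Order.covBy_iff_add_one_eq]

lemma exists_segment_labeling (h0 : 0 ∈ S) :
    ∃ L : Fin (N + 1) → ℤ, Set.BijOn L Set.univ (Set.Icc 1 (N + 1 : ℕ)) ∧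
      (∀ i j, segmentRank S i < segmentRank S j → L i < L j) ∧
      ∀ j ∉ S, L j = L (j - 1) + (-1) ^ segmentIndex S j := by
  obtain ⟨L, hbij, hlt, hcov⟩ := exists_bijOn_Icc_of_injective_key (segmentKey_injective h0)
  refine ⟨L, by simpa using hbij, fun i j hij => hlt i j (Prod.Lex.toLex_lt_toLex.2 (.inl hij)),
    fun j hj => ?_⟩
  rcases Nat.even_or_odd (segmentIndex S j) with heven | hodd
  · rw [heven.neg_one_pow, hcov _ _ (segmentKey_covBy_of_even h0 hj heven)]
  · rw [hodd.neg_one_pow, hcov _ _ (segmentKey_covBy_of_odd h0 hj hodd)]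
    ring

variable {L : Fin (N + 1) → ℤ}

lemma label_add_two_le (h0 : 0 ∈ S) (hS : Even #S)
    (hL : ∀ i j, segmentRank S i < segmentRank S j → L i < L j)
    (hi : i ∈ S) (hj : j ∈ S) (hpar : Even (segmentIndex S i) ↔ Even (segmentIndex S j))
    (hlt : zigzagPos S.card (segmentIndex S (i - 1)) <
      zigzagPos S.card (segmentIndex S (j - 1))) :
    L (i - 1) + L i + 2 ≤ L (j - 1) + L j := by
  obtain ⟨hmin, hmax⟩ := zigzag_pair_lt hS (segmentIndex_lt_card h0 (i - 1))
    (segmentIndex_lt_card h0 (j - 1))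
    (by rw [even_segmentIndex_sub_one_iff h0 hS hi, even_segmentIndex_sub_one_iff h0 hS hj, hpar])
    hlt
  rw [← segmentRank_of_mem h0 hi, ← segmentRank_of_mem h0 hj] at hmin hmax
  exact add_add_two_le_of_pair_lt hL hmin hmax

lemma two_le_abs_label_sub (h0 : 0 ∈ S) (hS : Even #S)
    (hL : ∀ i j, segmentRank S i < segmentRank S j → L i < L j)
    (hi : i ∈ S) (hj : j ∈ S) (hij : i ≠ j)
    (hpar : Even (segmentIndex S i) ↔ Even (segmentIndex S j)) :
    2 ≤ |(L (i - 1) + L i) - (L (j - 1) + L j)| := by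
  have hne : zigzagPos S.card (segmentIndex S (i - 1)) ≠
      zigzagPos S.card (segmentIndex S (j - 1)) := fun h => by
    have hprev := zigzagPos_injOn S.card (segmentIndex_lt_card h0 _) (segmentIndex_lt_card h0 _) h
    exact hij (segmentIndex_injOn hi hj
      (by rw [segmentIndex_of_mem h0 hi, segmentIndex_of_mem h0 hj, hprev]))
  rw [le_abs]
  rcases lt_or_gt_of_ne hne with hlt | hgt
  · have := label_add_two_le h0 hS hL hi hj hpar hlt
    right; linarith
  · have := label_add_two_le h0 hS hL hj hi hpar.symm hgt
    left; linarith

lemma isSeparatedOn_of_segment_labeling (h0 : 0 ∈ S) (hS : Even #S)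
    (hinj : Function.Injective L) (hpos : ∀ j, 1 ≤ L j)
    (hL : ∀ i j, segmentRank S i < segmentRank S j → L i < L j)
    (hstep : ∀ j ∉ S, L j = L (j - 1) + (-1) ^ segmentIndex S j) :
    IsSeparatedOn (fun j => (-1) ^ segmentIndex S (j - 1) * L (j - 1) -
      (-1) ^ segmentIndex S j * L j) S := by
  have hreal : ∀ j ∈ S, (-1) ^ segmentIndex S (j - 1) * L (j - 1) - (-1) ^ segmentIndex S j * L j =
      -(-1) ^ segmentIndex S j * (L (j - 1) + L j) := fun j hj => by
    rw [neg_one_pow_segmentIndex_sub_one h0 hS hj]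
    ring
  refine ⟨fun j hj => ?_, fun j hj => ?_, fun i hi j hj hij hsign => ?_⟩
  · rw [← segmentIndex_of_notMem h0 hj, hstep j hj, mul_add, ← pow_add,
      (Even.add_self _).neg_one_pow]
    ring
  · have hne : j - 1 ≠ j := fun h => iff_not_self (h ▸ even_segmentIndex_sub_one_iff h0 hS hj)
    rw [hreal j hj, abs_mul, abs_neg, abs_neg_one_pow, one_mul, le_abs]
    have := hinj.ne hne
    have := hpos j
    have := hpos (j - 1)
    omega
  · simp only [hreal i hi, hreal j hj] at hsign ⊢
    have hsum (k) : 0 < L (k - 1) + L k := by linarith [hpos (k - 1), hpos k]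
    have hprod : 0 < (-1) ^ (segmentIndex S i + segmentIndex S j) *
        ((L (i - 1) + L i) * (L (j - 1) + L j)) := by
      convert hsign using 1
      ring
    have hpar : Even (segmentIndex S i) ↔ Even (segmentIndex S j) := by
      refine Nat.even_add.1 (by_contra fun hodd => ?_)
      rw [(Nat.not_even_iff_odd.1 hodd).neg_one_pow] at hprod
      linarith [mul_pos (hsum i) (hsum j)]
    rw [neg_one_pow_congr hpar, ← mul_sub, abs_mul, abs_neg, abs_neg_one_pow, one_mul]
    exact two_le_abs_label_sub h0 hS hL hi hj hij hpar

theorem exists_signed_labeling (h0 : 0 ∈ S) (hS : Even #S) :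
    ∃ s : Fin (N + 1) → ℤ, Set.BijOn (fun j => |s j|) Set.univ (Set.Icc 1 (N + 1 : ℕ)) ∧
      IsSeparatedOn (fun j => s (j - 1) - s j) S := by
  obtain ⟨L, hbij, hL, hstep⟩ := exists_segment_labeling h0
  have hpos (j) : 1 ≤ L j := (hbij.mapsTo (Set.mem_univ j)).1
  refine ⟨fun j => (-1) ^ segmentIndex S j * L j, hbij.congr fun j _ => ?_,
    isSeparatedOn_of_segment_labeling h0 hS (Set.injOn_univ.1 hbij.injOn) hpos hL hstep⟩
  simp [abs_mul, abs_of_pos (zero_lt_one.trans_le (hpos j))]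

end Segment

section SignedLabeling

variable {V : Type*} {G : SimpleGraph V} {B : Finset (V × V)} {σ : V × V → ℤ}

/-- The arc obtained from `a` by reversing it if its signed label `σ a` is negative, so that a
signed labeling becomes a positive one with the same vertex-sums. -/
def reverseNeg (σ : V × V → ℤ) (a : V × V) : V × V :=
  if 0 ≤ σ a then a else a.swap

lemma reverseNeg_eq_or (σ : V × V → ℤ) (a : V × V) :
    reverseNeg σ a = a ∨ reverseNeg σ a = a.swap := by
  unfold reverseNeg
  split_ifs <;> simp

lemma IsOrientation.swap_notMem (hB : IsOrientation G B) {a : V × V} (ha : a ∈ B) : a.swap ∉ B :=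
  fun h => hB.2 a.1 a.2 ⟨ha, h⟩

lemma IsOrientation.reverseNeg_injOn (hB : IsOrientation G B) : Set.InjOn (reverseNeg σ) B := by
  intro a ha b hb hab
  have := hB.swap_notMem ha
  have := hB.swap_notMem hb
  have := a.swap_swap
  grind [reverseNeg]

variable [DecidableEq V]

lemma IsOrientation.image_reverseNeg (hB : IsOrientation G B) :
    IsOrientation G (B.image (reverseNeg σ)) := by
  have hmem (u v : V) : (u, v) ∈ B.image (reverseNeg σ) ↔
      (u, v) ∈ B ∧ 0 ≤ σ (u, v) ∨ (v, u) ∈ B ∧ σ (v, u) < 0 := by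
    simp only [mem_image, Prod.exists, reverseNeg]
    grind
  refine ⟨fun u v => ?_, fun u v => ?_⟩
  · rw [hB.1, hmem, hmem]
    grind
  · have := hB.2 u v
    rw [hmem, hmem]
    grind

lemma IsOrientation.exists_vertexSum_eq (hB : IsOrientation G B) {t : Set ℤ}
    (hσ : Set.BijOn (fun a => |σ a|) B t) :
    ∃ (A : Finset (V × V)) (c : V × V → ℤ),
      IsOrientation G A ∧ Set.BijOn c A t ∧ ∀ v, vertexSum A c v = vertexSum B σ v := by
  let c : V × V → ℤ := fun a => if a ∈ B then |σ a| else |σ a.swap|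
  have hc : ∀ a ∈ B, c (reverseNeg σ a) = |σ a| := fun a ha => by
    have := hB.swap_notMem ha
    rcases reverseNeg_eq_or σ a with h | h <;> simp [c, h, ha, this]
  refine ⟨B.image (reverseNeg σ), c, hB.image_reverseNeg, ?_, fun v => ?_⟩
  · rw [coe_image, ← Set.bijOn_comp_iff hB.reverseNeg_injOn]
    exact hσ.congr fun a ha => (hc a ha).symm
  · simp only [vertexSum, sum_filter, sum_image hB.reverseNeg_injOn, ← sum_sub_distrib]
    refine sum_congr rfl fun a ha => ?_
    rw [hc a ha]
    rcases le_or_gt 0 (σ a) with hnonneg | hneg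
    · rw [reverseNeg, if_pos hnonneg, abs_of_nonneg hnonneg]
    · rw [reverseNeg, if_neg hneg.not_ge, abs_of_neg hneg, Prod.fst_swap, Prod.snd_swap]
      split_ifs <;> ring

end SignedLabeling

section Cycle

open SimpleGraph

variable {V : Type*} {G : SimpleGraph V} {N : ℕ} {v : V}

lemma exists_isHamiltonianCycle_of_isCycles [Finite V] [DecidableEq V] (hconn : G.Connected)
    (hG : G.IsCycles) (hv : (G.neighborSet v).Nonempty) :
    ∃ p : G.Walk v v, p.IsHamiltonianCycle := by
  obtain ⟨p, hp, hverts⟩ := hG.exists_cycle_toSubgraph_verts_eq_connectedComponentSupp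
    (c := G.connectedComponentMk v) rfl hv
  refine ⟨p, hp, hp.isPath_tail.isHamiltonian_of_mem fun w => ?_⟩
  have hw : w ∈ p.support := by
    rw [← Walk.mem_verts_toSubgraph, hverts, ConnectedComponent.mem_supp_iff, ConnectedComponent.eq]
    exact hconn.preconnected w v
  rw [Walk.support_tail_of_not_nil _ hp.not_nil]
  obtain rfl | hne := eq_or_ne w v
  · exact Walk.end_mem_tail_support hp.not_nil
  · exact (Walk.mem_support_iff p).1 hw |>.resolve_left hne

lemma exists_iso_cycleGraph_of_isHamiltonianCycle [Fintype V] [DecidableEq V] {p : G.Walk v v}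
    (hG : G.IsCycles) (hp : p.IsHamiltonianCycle) (hN : Fintype.card V = N + 2) :
    ∃ φ : cycleGraph (N + 2) ≃g G, φ 0 = v := by
  classical
  have hlen : p.length = N + 2 := hp.length_eq.trans hN
  let f : Fin (N + 2) → V := fun i => p.getVert i
  have hinj : Function.Injective f := fun i j hij => Fin.ext <|
    hp.isCycle.getVert_injOn' (by grind) (by grind) hij
  have hsucc (i : Fin (N + 2)) : p.getVert (i + 1) = f (i + 1) := by
    cases i using Fin.lastCases with
    | last => simp [f, ← hlen]
    | cast i => simp [f]
  have hadj (i j : Fin (N + 2)) : G.Adj (f i) (f j) ↔ (cycleGraph (N + 2)).Adj i j := by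
    rw [← hp.isCycle.adj_toSubgraph_iff_of_isCycles hG
      (p.mem_verts_toSubgraph.2 (hp.mem_support _)), Walk.toSubgraph_adj_iff, cycleGraph_adj]
    constructor
    · rintro ⟨k, hk, hlt⟩
      obtain ⟨k, rfl⟩ : ∃ k' : Fin (N + 2), k = k' := ⟨⟨k, hlen ▸ hlt⟩, rfl⟩
      rw [hsucc, Sym2.eq_iff] at hk
      rcases hk with ⟨h₁, h₂⟩ | ⟨h₁, h₂⟩
      · right; rw [← hinj h₁, ← hinj h₂, add_sub_cancel_left]
      · left; rw [← hinj h₁, ← hinj h₂, add_sub_cancel_left]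
    · rintro (h | h)
      · exact ⟨j, by rw [hsucc, ← sub_eq_iff_eq_add'.1 h, Sym2.eq_swap], by omega⟩
      · exact ⟨i, by rw [hsucc, ← sub_eq_iff_eq_add'.1 h], by omega⟩
  let e : Fin (N + 2) ≃ V := Equiv.ofBijective f
    ((Fintype.bijective_iff_injective_and_card f).2 ⟨hinj, by simp [hN]⟩)
  exact ⟨⟨e, hadj _ _⟩, p.getVert_zero⟩

lemma isCycles_of_degree_eq_two [G.LocallyFinite] (hdeg : ∀ v, G.degree v = 2) :
    G.IsCycles := fun v _ => by
  rw [Set.ncard_eq_toFinset_card', Set.toFinset_card, card_neighborSet_eq_degree, hdeg]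

lemma exists_iso_cycleGraph [Fintype V] [G.LocallyFinite] (hconn : G.Connected)
    (hdeg : ∀ v, G.degree v = 2) (hN : Fintype.card V = N + 2) (v : V) :
    ∃ φ : cycleGraph (N + 2) ≃g G, φ 0 = v := by
  classical
  have hG := isCycles_of_degree_eq_two hdeg
  have hv : (G.neighborSet v).Nonempty :=
    (G.degree_pos_iff_exists_adj v).1 (by rw [hdeg]; exact two_pos)
  obtain ⟨p, hp⟩ := exists_isHamiltonianCycle_of_isCycles hconn hG hv
  exact exists_iso_cycleGraph_of_isHamiltonianCycle hG hp hN

variable [DecidableEq V]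

/-- The arcs of the directed cycle that visits `V` in the cyclic order given by `φ`. -/
def cyclicArcs (φ : Fin (N + 1) ≃ V) : Finset (V × V) :=
  univ.image fun i => (φ i, φ (i + 1))

lemma apply_mem_cyclicArcs (φ : Fin (N + 1) ≃ V) (i j : Fin (N + 1)) :
    (φ i, φ j) ∈ cyclicArcs φ ↔ j = i + 1 := by
  simp [cyclicArcs, eq_comm]

lemma isOrientation_cyclicArcs (φ : cycleGraph (N + 3) ≃g G) :
    IsOrientation G (cyclicArcs φ.toEquiv) := by
  have hmem (i j : Fin (N + 3)) : (φ i, φ j) ∈ cyclicArcs φ.toEquiv ↔ j = i + 1 :=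
    apply_mem_cyclicArcs φ.toEquiv i j
  refine ⟨φ.surjective.forall₂.2 fun i j => ?_, φ.surjective.forall₂.2 fun i j => ?_⟩
  · rw [φ.map_adj_iff, cycleGraph_adj, hmem, hmem, or_comm, sub_eq_iff_eq_add', sub_eq_iff_eq_add']
  · rw [hmem, hmem]
    rintro ⟨rfl, h⟩
    rw [add_assoc, left_eq_add] at h
    have h2 : 2 % (N + 3) = 2 := Nat.mod_eq_of_lt (by omega)
    simp [Fin.ext_iff, Fin.val_add, h2] at h

lemma bijOn_cyclicArcs (φ : Fin (N + 1) ≃ V) :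
    Set.BijOn (fun a : V × V => φ.symm a.1) (cyclicArcs φ) Set.univ := by
  rw [cyclicArcs, coe_image, coe_univ, ← Set.bijOn_comp_iff (fun i _ j _ h => by simpa using h)]
  simp [Function.comp_def]

lemma vertexSum_cyclicArcs (φ : Fin (N + 1) ≃ V) (s : Fin (N + 1) → ℤ) (j : Fin (N + 1)) :
    vertexSum (cyclicArcs φ) (fun a => s (φ.symm a.1)) (φ j) = s (j - 1) - s j := by
  have hinj : Set.InjOn (fun i => (φ i, φ (i + 1))) (univ : Finset (Fin (N + 1))) :=
    fun i _ i' _ h => φ.injective (Prod.mk.inj h).1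
  simp [vertexSum, cyclicArcs, sum_filter, sum_image hinj, ← eq_sub_iff_add_eq]

lemma exists_labeling_of_even_card [Fintype V] [G.LocallyFinite] (hconn : G.Connected)
    (hdeg : ∀ v, G.degree v = 2) (hV : 3 ≤ Fintype.card V) {R : Finset V} (hR : R.Nonempty)
    (heven : Even #R) :
    ∃ (A : Finset (V × V)) (c : V × V → ℤ), IsOrientation G A ∧
      Set.BijOn c A (Set.Icc 1 (Fintype.card V : ℤ)) ∧ IsSeparatedOn (vertexSum A c) R := by
  obtain ⟨N, hN⟩ := Nat.exists_eq_add_of_le' hV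
  obtain ⟨v₀, hv₀⟩ := hR
  obtain ⟨φ, hφ⟩ := exists_iso_cycleGraph hconn hdeg hN v₀
  obtain ⟨s, hs, hsep⟩ := exists_signed_labeling (S := R.map φ.symm.toEquiv.toEmbedding)
    (mem_map.2 ⟨v₀, hv₀, φ.symm_apply_eq.2 hφ.symm⟩) (by rwa [card_map])
  obtain ⟨A, c, hA, hc, hsum⟩ := (isOrientation_cyclicArcs φ).exists_vertexSum_eq
    (σ := fun a => s (φ.symm a.1)) (hs.comp (bijOn_cyclicArcs φ.toEquiv))
  refine ⟨A, c, hA, hN ▸ hc, .of_map φ.symm.toEquiv ?_⟩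
  convert hsep using 2 with j
  exact (hsum _).trans (vertexSum_cyclicArcs φ.toEquiv s j)

end Cycle

lemma exists_even_subset {α : Type*} [DecidableEq α] (R : Finset α) :
    ∃ S ⊆ R, Even #S ∧ #(R \ S) ≤ 1 := by
  obtain ⟨S, hSR, hS⟩ := exists_subset_card_eq (s := R) (n := 2 * (#R / 2)) (Nat.mul_div_le _ _)
  refine ⟨S, hSR, hS ▸ even_two_mul _, ?_⟩
  rw [card_sdiff_of_subset hSR]
  omega

/-- Key construction: let C be a cycle on m ≥ 3 vertices (i.e. a connected 2-regular graph
on m vertices) and let R be a set of n of its vertices with 2 ≤ n ≤ m. Then C has an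
orientation and a bijective arc-labeling by {1, …, m} such that every vertex outside R has
vertex-sum −1, the vertex-sums of vertices of R are pairwise distinct and nonzero, and any
two distinct vertices of R whose vertex-sums have the same sign have vertex-sums differing
by at least 2. -/
theorem cycle_labeling_real_imaginary
    {V : Type*} [Fintype V] [DecidableEq V]
    (C : SimpleGraph V) [DecidableRel C.Adj] (m n : ℕ)
    (hm : 3 ≤ m) (hcard : Fintype.card V = m)
    (hconn : C.Connected) (hreg : ∀ v : V, C.degree v = 2)
    (R : Finset V) (hR : R.card = n) (hn2 : 2 ≤ n) (hnm : n ≤ m) :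
    ∃ (A : Finset (V × V)) (c : V × V → ℤ),
      IsOrientation C A ∧
      Set.BijOn c ↑A (Set.Icc 1 (m : ℤ)) ∧
      (∀ v : V, v ∉ R → vertexSum A c v = -1) ∧
      (∀ u ∈ R, ∀ v ∈ R, u ≠ v → vertexSum A c u ≠ vertexSum A c v) ∧
      (∀ u ∈ R, vertexSum A c u ≠ 0) ∧
      (∀ u ∈ R, ∀ v ∈ R, u ≠ v → vertexSum A c u * vertexSum A c v > 0 →
        2 ≤ |vertexSum A c u - vertexSum A c v|) := by
  obtain ⟨S, hSR, heven, hrest⟩ := exists_even_subset R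
  have hS : S.Nonempty := by
    rw [← card_pos]
    have := card_sdiff_add_card_eq_card hSR
    omega
  obtain ⟨A, c, hA, hc, hsep⟩ := exists_labeling_of_even_card hconn hreg (hcard ▸ hm) hS heven
  have hgap := hsep.gap_of_card_sdiff_le_one hrest
  refine ⟨A, c, hA, hcard ▸ hc, fun v hv => hsep.eq_neg_one_of_notMem v fun h => hv (hSR h),
    fun u hu v hv huv heq => ?_, fun u _ => hsep.ne_zero u, fun u hu v hv => hgap hu hv⟩
  have := hgap hu hv huv (by rw [heq]; exact mul_self_pos.2 (hsep.ne_zero v))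
  simp [heq] at this
end
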